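/- arXiv:0812.2126 — 2 statements merged into one kernel-verified Lean document; each statement's English description precedes it below -/
import Mathlib

section
/- Let Γ be a torsion-free affine connection on a connected and simply connected open set U ⊆ ℝⁿ (n ≥ 2). Then the real vector space { f ∈ C^∞(U) : d^s_Γ(df) = 0 } of affine functions of Γ has dimension n + 1 (the maximal possible value) if and only if Γ is flat, i.e. its curvature Rᵏₗᵢⱼ = ∂ᵢΓᵏⱼₗ − ∂ⱼΓᵏᵢₗ + Σₘ(Γᵏᵢₘ Γᵐⱼₗ − Γᵏⱼₘ Γᵐᵢₗ) vanishes identically on U. -/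
open scoped BigOperators

/-- Partial derivative in the `i`-th coordinate direction. -/
noncomputable def pd {n : ℕ} (i : Fin n) (f : (Fin n → ℝ) → ℝ) (x : Fin n → ℝ) : ℝ :=
  fderiv ℝ f x (Pi.single i 1)

/-- A torsion-free affine connection on `U`, given by its Christoffel symbols `Γ k i j`
(smooth on `U` and symmetric in the lower indices `i j`). -/
def IsTorsionFreeConn {n : ℕ} (U : Set (Fin n → ℝ))
    (Γ : Fin n → Fin n → Fin n → (Fin n → ℝ) → ℝ) : Prop :=
  (∀ k i j, ContDiffOn ℝ (⊤ : ℕ∞) (Γ k i j) U) ∧ (∀ k i j x, Γ k i j x = Γ k j i x)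

/-- `γ` is a geodesic of `Γ` on the set `I ⊆ ℝ`, with image in `U`. -/
def IsGeodesicOn {n : ℕ} (U : Set (Fin n → ℝ))
    (Γ : Fin n → Fin n → Fin n → (Fin n → ℝ) → ℝ)
    (I : Set ℝ) (γ : ℝ → Fin n → ℝ) : Prop :=
  (∀ t ∈ I, γ t ∈ U) ∧ ContDiffOn ℝ 2 γ I ∧
    ∀ t ∈ I, ∀ k, deriv (fun s => deriv (fun u => γ u k) s) t +
      ∑ i, ∑ j, Γ k i j (γ t) * deriv (fun u => γ u i) t * deriv (fun u => γ u j) t = 0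

/-- The codimension-one foliation defined by the `1`-form `ω` is totally geodesic for `Γ`:
every geodesic tangent to a leaf at time `0` stays tangent to the kernel of `ω`. -/
def TotallyGeodesic {n : ℕ} (U : Set (Fin n → ℝ))
    (Γ : Fin n → Fin n → Fin n → (Fin n → ℝ) → ℝ)
    (ω : (Fin n → ℝ) → Fin n → ℝ) : Prop :=
  ∀ I : Set ℝ, IsOpen I → I.OrdConnected → (0 : ℝ) ∈ I →
    ∀ γ : ℝ → Fin n → ℝ, IsGeodesicOn U Γ I γ →
      (∑ k, ω (γ 0) k * deriv (fun u => γ u k) 0) = 0 →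
      ∀ t ∈ I, (∑ k, ω (γ t) k * deriv (fun u => γ u k) t) = 0

/-- `ω` is a smooth nonvanishing `1`-form on `U` satisfying the integrability
condition `ω ∧ dω = 0`. -/
def IsFoliationForm {n : ℕ} (U : Set (Fin n → ℝ)) (ω : (Fin n → ℝ) → Fin n → ℝ) : Prop :=
  ContDiffOn ℝ (⊤ : ℕ∞) ω U ∧ (∀ x ∈ U, ω x ≠ 0) ∧
    ∀ x ∈ U, ∀ i j k,
      ω x i * (pd j (fun y => ω y k) x - pd k (fun y => ω y j) x) +
      ω x j * (pd k (fun y => ω y i) x - pd i (fun y => ω y k) x) +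
      ω x k * (pd i (fun y => ω y j) x - pd j (fun y => ω y i) x) = 0

/-- Components of the symmetric covariant differential `d^s_Γ ω`. -/
noncomputable def dsym {n : ℕ} (Γ : Fin n → Fin n → Fin n → (Fin n → ℝ) → ℝ)
    (ω : (Fin n → ℝ) → Fin n → ℝ) (i j : Fin n) (x : Fin n → ℝ) : ℝ :=
  (pd i (fun y => ω y j) x + pd j (fun y => ω y i) x) / 2 - ∑ k, Γ k i j x * ω x k

/-- Components of the symmetric product `θ·ω` of two `1`-forms. -/
noncomputable def symProd {n : ℕ} (θ ω : (Fin n → ℝ) → Fin n → ℝ) (i j : Fin n) (x : Fin n → ℝ) : ℝ :=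
  (θ x i * ω x j + θ x j * ω x i) / 2

/-- A `d`-web of hypersurfaces on `U`: a family of smooth nonvanishing integrable `1`-forms,
any `n` of which are linearly independent at every point of `U`. -/
def IsWeb {n d : ℕ} (U : Set (Fin n → ℝ)) (ωs : Fin d → (Fin n → ℝ) → Fin n → ℝ) : Prop :=
  (∀ i, IsFoliationForm U (ωs i)) ∧
    ∀ x ∈ U, ∀ σ : Fin n → Fin d, Function.Injective σ →
      LinearIndependent ℝ (fun i => ωs (σ i) x)

/-- `Γ` and `Γ'` are projectively equivalent on `U`:
`Γ'ᵏᵢⱼ = Γᵏᵢⱼ + δᵏᵢ ρⱼ + δᵏⱼ ρᵢ` for some smooth `1`-form `ρ`. -/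
def ProjEquiv {n : ℕ} (U : Set (Fin n → ℝ))
    (Γ Γ' : Fin n → Fin n → Fin n → (Fin n → ℝ) → ℝ) : Prop :=
  ∃ ρ : (Fin n → ℝ) → Fin n → ℝ, ContDiffOn ℝ (⊤ : ℕ∞) ρ U ∧
    ∀ x ∈ U, ∀ k i j, Γ' k i j x =
      Γ k i j x + (if k = i then ρ x j else 0) + (if k = j then ρ x i else 0)

/-- `X` is the frame of vector fields dual to the coframe `ωs` on `U`. -/
def IsDualFrame {n : ℕ} (U : Set (Fin n → ℝ)) (ωs : Fin n → (Fin n → ℝ) → Fin n → ℝ)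
    (X : Fin n → (Fin n → ℝ) → Fin n → ℝ) : Prop :=
  (∀ i, ContDiffOn ℝ (⊤ : ℕ∞) (X i) U) ∧
    ∀ x ∈ U, ∀ i j, (∑ k, ωs i x k * X j x k) = if i = j then 1 else 0

/-- The web invariants `s^a_{ij} = (1/(aᵢ−aⱼ))·(aᵢ ∂ⱼ − aⱼ ∂ᵢ) log (aⱼ/aᵢ)`, where `∂ᵢ`
is derivation along the frame vector field `X i`. -/
noncomputable def sInv {n : ℕ} (X : Fin n → (Fin n → ℝ) → Fin n → ℝ)
    (a : Fin n → (Fin n → ℝ) → ℝ) (i j : Fin n) (x : Fin n → ℝ) : ℝ :=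
  (1 / (a i x - a j x)) *
    (a i x * (fderiv ℝ (a j) x (X j x) / a j x - fderiv ℝ (a i) x (X j x) / a i x) -
     a j x * (fderiv ℝ (a j) x (X i x) / a j x - fderiv ℝ (a i) x (X i x) / a i x))

/-- The curvature tensor `Rᵏₗᵢⱼ` of the connection `Γ`. -/
noncomputable def curv {n : ℕ} (Γ : Fin n → Fin n → Fin n → (Fin n → ℝ) → ℝ)
    (k l i j : Fin n) (x : Fin n → ℝ) : ℝ :=
  pd i (Γ k j l) x - pd j (Γ k i l) x +
    ∑ m, (Γ k i m x * Γ m j l x - Γ k j m x * Γ m i l x)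

section

open Set Filter Topology

set_option maxSynthPendingDepth 3

/-- A locally constant system of transports `T i x : V → V` (from `i` to a nearby point `x`, with
inverse `S i x`) over a simply connected space has a global section through every point. -/
theorem exists_section_of_locally_constant_transport {X V : Type*} [TopologicalSpace X]
    [SimplyConnectedSpace X] [LocallyPathConnectedSpace X] (B : X → Set X)
    (hB : ∀ i, IsOpen (B i)) (hmem : ∀ i, i ∈ B i) (T S : X → X → V → V)
    (hST : ∀ i, ∀ x ∈ B i, ∀ v, S i x (T i x v) = v)
    (hTS : ∀ i, ∀ x ∈ B i, ∀ v, T i x (S i x v) = v) (hT : ∀ i v, T i i v = v)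
    (hloc : ∀ i j, ∀ x ∈ B i ∩ B j, ∀ v, ∀ᶠ y in 𝓝 x, S j y (T i y v) = S j x (T i x v))
    (x₀ : X) (v₀ : V) :
    ∃ F : X → V, F x₀ = v₀ ∧ ∀ x, ∀ᶠ y in 𝓝 x, F y = T x y (F x) := by
  let _ : TopologicalSpace V := ⊥
  have : DiscreteTopology V := ⟨rfl⟩
  let Z : FiberBundleCore X X V :=
    { baseSet := B
      isOpen_baseSet := hB
      indexAt := id
      mem_baseSet_at := hmem
      coordChange := fun i j x v => S j x (T i x v)
      coordChange_self := hST
      continuousOn_coordChange := by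
        rintro i j ⟨x, v⟩ ⟨hx, -⟩
        apply ContinuousAt.continuousWithinAt
        have h : ∀ᶠ p : X × V in 𝓝 (x, v), S j p.1 (T i p.1 p.2) = S j x (T i x v) := by
          rw [nhds_prod_eq, nhds_discrete V, Filter.prod_pure, eventually_map]
          exact hloc i j x hx v
        exact continuousAt_const.congr (h.mono fun _ h => h.symm)
      coordChange_comp := by
        intro i j k x hx v
        simp only [hTS j x hx.1.2] }
  obtain ⟨s, ⟨hs₀, hs⟩, -⟩ :=
    (FiberBundle.isCoveringMap (F := V) (E := Z.Fiber)).existsUnique_continuousMap_lifts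
      (ContinuousMap.id X) x₀ (⟨x₀, v₀⟩ : Bundle.TotalSpace V Z.Fiber) rfl
  have hproj : ∀ x, (s x).proj = x := fun x => congrFun hs x
  obtain ⟨F, hF⟩ : ∃ F : X → V, ∀ x, F x = (s x).snd := ⟨_, fun _ => rfl⟩
  refine ⟨F, (hF x₀).trans (by rw [hs₀]), fun x => ?_⟩
  have hcont : ContinuousAt (fun y => (Z.localTriv x (s y)).2) x := by
    refine continuousAt_snd.comp (ContinuousAt.comp ?_ s.continuous.continuousAt)
    apply (Z.localTriv x).continuousAt
    rw [Z.mem_localTriv_source, hproj]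
    exact hmem x
  have hev : ∀ᶠ y in 𝓝 x, (Z.localTriv x (s y)).2 = (Z.localTriv x (s x)).2 := by
    have := hcont.tendsto
    rwa [nhds_discrete V, tendsto_pure] at this
  have key : ∀ y, (Z.localTriv x (s y)).2 = S x y (F y) := by
    intro y
    have h : (Z.localTriv x (s y)).2 = S x (s y).proj (T (s y).proj (s y).proj (F y)) :=
      congrArg (fun v => S x (s y).proj (T (s y).proj (s y).proj v)) (hF y).symm
    rw [h, hT, hproj]
  filter_upwards [hev, (hB x).mem_nhds (hmem x)] with y hy hyB
  have hx := hST x x (hmem x) (F x)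
  rw [hT] at hx
  rw [key, key, hx] at hy
  rw [← hy, hTS x y hyB]

/-- A linear differential equation on `[0, 1]` with small coefficients is solvable. -/
theorem exists_hasDerivWithinAt_linear {V : Type*} [NormedAddCommGroup V] [NormedSpace ℝ V]
    [CompleteSpace V] {L : ℝ → V →L[ℝ] V} (hL : ContinuousOn L (Icc 0 1))
    (hbound : ∀ t ∈ Icc (0 : ℝ) 1, ‖L t‖ ≤ 1 / 2) (v : V) :
    ∃ φ : ℝ → V, φ 0 = v ∧
      ∀ t ∈ Icc (0 : ℝ) 1, HasDerivWithinAt φ (L t (φ t)) (Icc 0 1) t := by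
  have hPL : IsPicardLindelof (fun t x => L t x) (⟨0, by simp⟩ : Icc (0 : ℝ) 1) v ‖v‖₊ 0 ‖v‖₊ 1 :=
    { lipschitzOnWith := fun t ht => ((L t).lipschitz.weaken (by
          rw [← NNReal.coe_le_coe, coe_nnnorm, NNReal.coe_one]
          linarith [hbound t ht])).lipschitzOnWith
      continuousOn := fun x _ => hL.clm_apply continuousOn_const
      norm_le := fun t ht x hx => by
        have hx' : ‖x‖ ≤ 2 * ‖v‖ := by
          have h := norm_le_norm_add_norm_sub' x v
          rw [mem_closedBall_iff_norm, coe_nnnorm] at hx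
          linarith
        calc ‖L t x‖ ≤ ‖L t‖ * ‖x‖ := (L t).le_opNorm x
          _ ≤ 1 / 2 * (2 * ‖v‖) := by gcongr; exact hbound t ht
          _ = _ := by rw [coe_nnnorm]; ring
      mul_max_le := by simp }
  exact hPL.exists_eq_forall_mem_Icc_hasDerivWithinAt₀

variable {E V : Type*} [NormedAddCommGroup E] [NormedSpace ℝ E] [NormedAddCommGroup V]
  [NormedSpace ℝ V]

/-- `F` is parallel on `s` for the connection form `A`. -/
def IsParallelOn (A : E → E →L[ℝ] V →L[ℝ] V) (F : E → V) (s : Set E) : Prop :=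
  ∀ x ∈ s, HasFDerivAt F ((A x).flip (F x)) x

/-- The curvature of the connection form `A` vanishes at `x`. -/
def IsFlatAt (A : E → E →L[ℝ] V →L[ℝ] V) (x : E) : Prop :=
  ∀ u w v, fderiv ℝ A x u w v + A x w (A x u v) = fderiv ℝ A x w u v + A x u (A x w v)

theorem IsParallelOn.mono {A : E → E →L[ℝ] V →L[ℝ] V} {F : E → V} {s t : Set E}
    (hF : IsParallelOn A F s) (hts : t ⊆ s) : IsParallelOn A F t :=
  fun x hx => hF x (hts hx)

theorem IsParallelOn.sub {A : E → E →L[ℝ] V →L[ℝ] V} {F G : E → V} {s : Set E}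
    (hF : IsParallelOn A F s) (hG : IsParallelOn A G s) :
    IsParallelOn A (fun x => F x - G x) s := fun x hx => by
  simpa only [map_sub] using (hF x hx).fun_sub (hG x hx)

theorem IsParallelOn.eqOn_zero_of_convex {A : E → E →L[ℝ] V →L[ℝ] V} {F : E → V} {s : Set E}
    (hF : IsParallelOn A F s) (hs : Convex ℝ s) {M : ℝ} (hM : ∀ x ∈ s, ‖A x‖ ≤ M) {p : E}
    (hp : p ∈ s) (hFp : F p = 0) : ∀ q ∈ s, F q = 0 := by
  intro q hq
  have hseg : ∀ t ∈ Icc (0 : ℝ) 1, p + t • (q - p) ∈ s := fun t ht =>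
    hs.add_smul_sub_mem hp hq ht
  have hder : ∀ t ∈ Icc (0 : ℝ) 1, HasDerivAt (fun t : ℝ => F (p + t • (q - p)))
      (A (p + t • (q - p)) (q - p) (F (p + t • (q - p)))) t := fun t ht => by
    have h := ((hasDerivAt_id t).smul_const (q - p)).const_add p
    simpa [Function.comp_def] using (hF _ (hseg t ht)).comp_hasDerivAt t h
  have := eq_zero_of_abs_deriv_le_mul_abs_self_of_eq_zero_right (K := M * ‖q - p‖)
    (fun t ht => (hder t ht).continuousAt.continuousWithinAt)
    (fun t ht => (hder t (Ico_subset_Icc_self ht)).hasDerivWithinAt) (by simpa using hFp)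
    (fun t ht => (ContinuousLinearMap.le_opNorm _ _).trans (by
      gcongr
      refine (ContinuousLinearMap.le_opNorm _ _).trans ?_
      gcongr
      exact hM _ (hseg t (Ico_subset_Icc_self ht)))) 1 (by simp)
  simpa using this

theorem IsParallelOn.eqOn_of_convex {A : E → E →L[ℝ] V →L[ℝ] V} {F G : E → V} {s : Set E}
    (hF : IsParallelOn A F s) (hG : IsParallelOn A G s) (hs : Convex ℝ s) {M : ℝ}
    (hM : ∀ x ∈ s, ‖A x‖ ≤ M) {p : E} (hp : p ∈ s) (h : F p = G p) : EqOn F G s :=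
  fun q hq => sub_eq_zero.1
    ((hF.sub hG).eqOn_zero_of_convex hs hM hp (sub_eq_zero.2 h) q hq)

theorem gronwallBound_zero_left (K ε x : ℝ) :
    gronwallBound 0 K ε x = ε * gronwallBound 0 K 1 x := by
  by_cases hK : K = 0
  · simp [gronwallBound, hK]
  · simp [gronwallBound, hK]; ring

/-- The defect of the first-order approximation `w + t • A₀ h w` to the solution of a ray equation,
when the linearised terms cancel by flatness. -/
theorem norm_ray_defect_le {A' A₀ : E →L[ℝ] V →L[ℝ] V} {DA : E →L[ℝ] E →L[ℝ] V →L[ℝ] V}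
    {η h : E} {w w' : V} {t d M M' C K : ℝ} (ht : t ∈ Icc (0 : ℝ) 1)
    (hd0 : 0 ≤ d) (hM0 : 0 ≤ M) (hM'0 : 0 ≤ M') (hC0 : 0 ≤ C)
    (hflat : DA η h w + A₀ h (A₀ η w) = DA h η w + A₀ η (A₀ h w))
    (hsmall : ‖A' (η + h)‖ ≤ 1 / 2) (hζ : ‖η + h‖ ≤ d) (hlip : ‖A' - A₀‖ ≤ M' * ‖h‖)
    (htaylor : ‖A' - A₀ - t • DA h‖ ≤ C * ‖h‖ * ‖h‖) (hM : ‖A₀‖ ≤ M) (hM' : ‖DA‖ ≤ M')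
    (hK : ‖w‖ ≤ K) :
    ‖A' (η + h) w' - (A₀ η w + (t • (DA η h w + A₀ h (A₀ η w)) + A₀ h w))‖ ≤
      1 * ‖w' - (w + t • A₀ h w)‖ +
        (M' * K + C * d * K + M * M * K + M' * d * (M * K)) * ‖h‖ ^ 2 := by
  have hK0 : 0 ≤ K := (norm_nonneg _).trans hK
  have hAh : ‖A₀ (h) w‖ ≤ M * ‖h‖ * K :=
    (A₀.le_opNorm₂ _ _).trans (by gcongr)
  have hsplit : A' (η + h) w' - (A₀ (η) w +
      (t • (DA (η) (h) w + A₀ (h) (A₀ (η) w)) + A₀ (h) w)) =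
      A' (η + h) (w' - (w + t • A₀ (h) w)) +
      (t • DA (h) (h) w + (A' - A₀ - t • DA (h)) (η + h) w +
        t • A₀ (h) (A₀ (h) w) + t • (A' - A₀) (η + h) (A₀ (h) w)) := by
    rw [hflat]
    simp only [map_add, map_sub, map_smul, add_apply,
      sub_apply, smul_apply]
    module
  have ht_le : ∀ a : V, ‖t • a‖ ≤ ‖a‖ := fun a => by
    rw [norm_smul, Real.norm_of_nonneg ht.1]
    exact mul_le_of_le_one_left (norm_nonneg _) ht.2
  have b0 : ‖A' (η + h) (w' - (w + t • A₀ (h) w))‖ ≤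
      1 * ‖w' - (w + t • A₀ (h) w)‖ :=
    ((A' (η + h)).le_opNorm _).trans (by gcongr; linarith)
  have b1 : ‖t • DA (h) (h) w‖ ≤ M' * ‖h‖ * ‖h‖ * K :=
    (ht_le _).trans (((DA (h)).le_opNorm₂ _ _).trans (by
      gcongr; exact (DA.le_opNorm _).trans (by gcongr)))
  have b2 : ‖(A' - A₀ - t • DA (h)) (η + h) w‖ ≤ C * ‖h‖ * ‖h‖ * d * K :=
    (ContinuousLinearMap.le_opNorm₂ _ _ _).trans (by gcongr)
  have b3 : ‖t • A₀ (h) (A₀ (h) w)‖ ≤ M * ‖h‖ * (M * ‖h‖ * K) :=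
    (ht_le _).trans ((A₀.le_opNorm₂ _ _).trans (by gcongr))
  have b4 : ‖t • (A' - A₀) (η + h) (A₀ (h) w)‖ ≤
      M' * ‖h‖ * d * (M * ‖h‖ * K) :=
    (ht_le _).trans ((ContinuousLinearMap.le_opNorm₂ _ _ _).trans (by gcongr))
  rw [hsplit]
  refine (norm_add_le_of_le b0 (norm_add_le_of_le (norm_add_le_of_le
    (norm_add_le_of_le b1 b2) b3) b4)).trans (le_of_eq ?_)
  ring

/-- On a small convex open set, a flat connection form has parallel sections with
arbitrary value at a given point. -/
theorem exists_isParallelOn_of_convex [CompleteSpace V] {A : E → E →L[ℝ] V →L[ℝ] V} {s : Set E}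
    (hso : IsOpen s) (hs : Convex ℝ s) {d M M' C : ℝ} (hC0 : 0 ≤ C) (hd : ∀ x ∈ s, ∀ y ∈ s, ‖x - y‖ ≤ d)
    (hM : ∀ x ∈ s, ‖A x‖ ≤ M) (hMd : M * d ≤ 1 / 2) (hA : ∀ x ∈ s, DifferentiableAt ℝ A x)
    (hM' : ∀ x ∈ s, ‖fderiv ℝ A x‖ ≤ M')
    (hC : ∀ x ∈ s, ∀ y ∈ s, ‖fderiv ℝ A x - fderiv ℝ A y‖ ≤ C * ‖x - y‖)
    (hflat : ∀ x ∈ s, IsFlatAt A x) {p : E} (hp : p ∈ s) (v : V) :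
    ∃ F : E → V, F p = v ∧ IsParallelOn A F s := by
  have hd0 : 0 ≤ d := (norm_nonneg _).trans (hd p hp p hp)
  have hM0 : 0 ≤ M := (norm_nonneg _).trans (hM p hp)
  have hM'0 : 0 ≤ M' := (norm_nonneg _).trans (hM' p hp)
  have hseg : ∀ y ∈ s, ∀ t ∈ Icc (0 : ℝ) 1, p + t • (y - p) ∈ s := fun y hy t ht =>
    hs.add_smul_sub_mem hp hy ht
  have hline : ∀ (y : E) (t : ℝ), HasDerivAt (fun t : ℝ => p + t • (y - p)) (y - p) t :=
    fun y t => by simpa using ((hasDerivAt_id t).smul_const (y - p)).const_add p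
  have hAline : ∀ y ∈ s, ∀ t ∈ Icc (0 : ℝ) 1, HasDerivAt (fun t : ℝ => A (p + t • (y - p)))
      (fderiv ℝ A (p + t • (y - p)) (y - p)) t := fun y hy t ht =>
    (hA _ (hseg y hy t ht)).hasFDerivAt.comp_hasDerivAt t (hline y t)
  have hsmall : ∀ y ∈ s, ∀ t ∈ Icc (0 : ℝ) 1, ‖A (p + t • (y - p)) (y - p)‖ ≤ 1 / 2 :=
    fun y hy t ht => (ContinuousLinearMap.le_opNorm _ _).trans
      ((mul_le_mul (hM _ (hseg y hy t ht)) (hd y hy p hp) (norm_nonneg _) hM0).trans hMd)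
  have hex : ∀ y : E, ∃ φ : ℝ → V, φ 0 = v ∧ (y ∈ s → ∀ t ∈ Icc (0 : ℝ) 1,
      HasDerivWithinAt φ (A (p + t • (y - p)) (y - p) (φ t)) (Icc 0 1) t) := by
    intro y
    by_cases hy : y ∈ s
    · obtain ⟨φ, h0, hφ⟩ := exists_hasDerivWithinAt_linear
        (L := fun t => A (p + t • (y - p)) (y - p))
        (fun t ht => ((hAline y hy t ht).continuousAt.clm_apply
          continuousAt_const).continuousWithinAt) (hsmall y hy) v
      exact ⟨φ, h0, fun _ => hφ⟩
    · exact ⟨fun _ => v, rfl, fun h => absurd h hy⟩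
  choose φ hφ0 hφ using hex
  refine ⟨fun y => φ y 1, ?_, fun y hy => ?_⟩
  · have hconst := constant_of_derivWithin_zero (f := φ p) (a := 0) (b := 1)
      (fun t ht => (hφ p hp t ht).differentiableWithinAt)
      (fun t ht => by
        have h := hφ p hp t (Ico_subset_Icc_self ht)
        rw [h.derivWithin (uniqueDiffOn_Icc_zero_one t (Ico_subset_Icc_self ht))]
        simp)
    exact (hconst 1 (by simp)).trans (hφ0 p)
  obtain ⟨K, hK⟩ : ∃ K, ∀ t ∈ Icc (0 : ℝ) 1, ‖φ y t‖ ≤ K :=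
    isCompact_Icc.exists_bound_of_continuousOn fun t ht => (hφ y hy t ht).continuousWithinAt
  have hK0 : 0 ≤ K := (norm_nonneg _).trans (hK 0 (by simp))
  set D := M' * K + C * d * K + M * M * K + M' * d * (M * K) with hD
  have key : ∀ z ∈ s, ‖φ z 1 - φ y 1 - A y (z - y) (φ y 1)‖ ≤
      gronwallBound 0 1 1 1 * D * ‖z - y‖ ^ 2 := by
    intro z hz
    have hder : ∀ t ∈ Icc (0 : ℝ) 1, HasDerivWithinAt
        (fun t : ℝ => φ z t - (φ y t + t • A (p + t • (y - p)) (z - y) (φ y t)))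
        (A (p + t • (z - p)) (z - p) (φ z t) - (A (p + t • (y - p)) (y - p) (φ y t) +
          (t • (fderiv ℝ A (p + t • (y - p)) (y - p) (z - y) (φ y t) +
            A (p + t • (y - p)) (z - y) (A (p + t • (y - p)) (y - p) (φ y t))) +
          A (p + t • (y - p)) (z - y) (φ y t)))) (Icc 0 1) t := by
      intro t ht
      have h1 := ((hAline y hy t ht).hasDerivWithinAt (s := Icc 0 1)).clm_apply
        (hasDerivWithinAt_const t (Icc 0 1) (z - y))
      have h2 := (hasDerivWithinAt_id t (Icc 0 1)).smul (h1.clm_apply (hφ y hy t ht))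
      have h3 := (hφ z hz t ht).sub ((hφ y hy t ht).add h2)
      refine h3.congr_deriv ?_
      simp only [id, map_zero, add_zero, one_smul]
    have hbound : ∀ t ∈ Ico (0 : ℝ) 1, ‖A (p + t • (z - p)) (z - p) (φ z t) -
        (A (p + t • (y - p)) (y - p) (φ y t) +
          (t • (fderiv ℝ A (p + t • (y - p)) (y - p) (z - y) (φ y t) +
            A (p + t • (y - p)) (z - y) (A (p + t • (y - p)) (y - p) (φ y t))) +
          A (p + t • (y - p)) (z - y) (φ y t)))‖ ≤
        1 * ‖φ z t - (φ y t + t • A (p + t • (y - p)) (z - y) (φ y t))‖ + D * ‖z - y‖ ^ 2 := by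
      intro t ht'
      have ht := Ico_subset_Icc_self ht'
      have hxy := hseg y hy t ht
      have hxz := hseg z hz t ht
      have hflat_t := hflat _ hxy (y - p) (z - y) (φ y t)
      have hstep : (p + t • (z - p)) - (p + t • (y - p)) = t • (z - y) := by module
      have hstep_le : ‖(p + t • (z - p)) - (p + t • (y - p))‖ ≤ ‖z - y‖ := by
        rw [hstep, norm_smul, Real.norm_of_nonneg ht.1]
        exact mul_le_of_le_one_left (norm_nonneg _) ht.2
      have hzp : z - p = (y - p) + (z - y) := by abel
      have hsmall_t := hsmall z hz t ht
      have hζ := hd z hz p hp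
      have hlip : ‖A (p + t • (z - p)) - A (p + t • (y - p))‖ ≤ M' * ‖z - y‖ :=
        (hs.norm_image_sub_le_of_norm_fderiv_le hA hM' hxy hxz).trans (by gcongr)
      have htaylor : ‖A (p + t • (z - p)) - A (p + t • (y - p)) -
          t • fderiv ℝ A (p + t • (y - p)) (z - y)‖ ≤ C * ‖z - y‖ * ‖z - y‖ := by
        have h := (hs.inter (convex_closedBall (p + t • (y - p)) ‖z - y‖)).norm_image_sub_le_of_norm_fderiv_le'
          (f := A) (φ := fderiv ℝ A (p + t • (y - p))) (C := C * ‖z - y‖)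
          (fun x hx => hA x hx.1)
          (fun x hx => (hC x hx.1 _ hxy).trans (by
            gcongr; exact mem_closedBall_iff_norm.1 hx.2))
          ⟨hxy, Metric.mem_closedBall_self (norm_nonneg _)⟩
          ⟨hxz, mem_closedBall_iff_norm.2 hstep_le⟩
        rw [hstep, map_smul, ← hstep] at h
        exact h.trans (by gcongr)
      have hMx := hM _ hxy
      have hM'x := hM' _ hxy
      have hKt := hK t ht
      generalize A (p + t • (z - p)) = A' at *
      generalize fderiv ℝ A (p + t • (y - p)) = DA at *
      generalize A (p + t • (y - p)) = A₀ at *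
      generalize φ y t = w at *
      generalize φ z t = w' at *
      rw [hzp] at hsmall_t hζ ⊢
      exact norm_ray_defect_le ht hd0 hM0 hM'0 hC0 hflat_t hsmall_t hζ hlip htaylor hMx hM'x hKt
    have h := norm_le_gronwallBound_of_norm_deriv_right_le
      (fun t ht => (hder t ht).continuousWithinAt)
      (fun t ht => ((hder t (Ico_subset_Icc_self ht)).mono_of_mem_nhdsWithin
        (Icc_mem_nhdsGE_of_mem ht)))
      (δ := 0) (by simp [hφ0]) hbound 1 (by simp)
    rw [gronwallBound_zero_left] at h
    simp only [one_smul, sub_zero, add_sub_cancel, ← sub_sub] at h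
    exact h.trans (le_of_eq (by ring))
  rw [hasFDerivAt_iff_isLittleO]
  refine Asymptotics.IsBigO.trans_isLittleO (g := fun z => ‖z - y‖ ^ 2) ?_ ?_
  · refine Asymptotics.IsBigO.of_bound (gronwallBound 0 1 1 1 * D) ?_
    filter_upwards [hso.mem_nhds hy] with z hz
    simpa using key z hz
  · simpa using Asymptotics.isLittleO_pow_sub_sub y one_lt_two

/-- A `C²` flat connection form has, near every point, a ball on which parallel sections with
arbitrary value at an arbitrary point exist. -/
theorem exists_ball_forall_exists_isParallelOn [CompleteSpace V] {A : E → E →L[ℝ] V →L[ℝ] V}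
    {U : Set E} (hU : IsOpen U) (hA : ContDiffOn ℝ 2 A U) (hflat : ∀ x ∈ U, IsFlatAt A x)
    {x : E} (hx : x ∈ U) :
    ∃ r > 0, Metric.ball x r ⊆ U ∧ (∃ M, ∀ y ∈ Metric.ball x r, ‖A y‖ ≤ M) ∧
      ∀ p ∈ Metric.ball x r, ∀ v : V, ∃ F : E → V, F p = v ∧
        IsParallelOn A F (Metric.ball x r) := by
  have hAx : ContDiffAt ℝ 2 A x := hA.contDiffAt (hU.mem_nhds hx)
  have hDAx : ContDiffAt ℝ 1 (fderiv ℝ A) x := hAx.fderiv_right (by norm_num)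
  obtain ⟨C, t, ht, hC⟩ := hDAx.exists_lipschitzOnWith
  have hM : ∀ᶠ y in 𝓝 x, ‖A y‖ ≤ ‖A x‖ + 1 :=
    hAx.continuousAt.norm.eventually_le_const (lt_add_one _)
  have hM' : ∀ᶠ y in 𝓝 x, ‖fderiv ℝ A y‖ ≤ ‖fderiv ℝ A x‖ + 1 :=
    hDAx.continuousAt.norm.eventually_le_const (lt_add_one _)
  obtain ⟨ε, hε, hball⟩ := Metric.eventually_nhds_iff_ball.1
    (hM.and (hM'.and ((hU.eventually_mem hx).and ht)))
  set M := ‖A x‖ + 1 with hMdef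
  have hMpos : 0 < M := by positivity
  refine ⟨min ε (1 / (4 * M)), by positivity, fun y hy => ?_, ⟨M, fun y hy => ?_⟩, ?_⟩
  · exact (hball y (Metric.ball_subset_ball (min_le_left _ _) hy)).2.2.1
  · exact (hball y (Metric.ball_subset_ball (min_le_left _ _) hy)).1
  intro p hp v
  have hsub : Metric.ball x (min ε (1 / (4 * M))) ⊆ Metric.ball x ε :=
    Metric.ball_subset_ball (min_le_left _ _)
  refine exists_isParallelOn_of_convex Metric.isOpen_ball (convex_ball _ _) (d := 1 / (2 * M))
    (M := M) (M' := ‖fderiv ℝ A x‖ + 1) (C := C) C.coe_nonneg ?_ ?_ ?_ ?_ ?_ ?_ ?_ hp v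
  · intro y hy z hz
    have h1 := (Metric.mem_ball.1 hy).trans_le (min_le_right _ _)
    have h2 := (Metric.mem_ball.1 hz).trans_le (min_le_right _ _)
    have h3 := dist_triangle_right y z x
    have h4 : 1 / (4 * M) + 1 / (4 * M) = 1 / (2 * M) := by field_simp; norm_num
    rw [← dist_eq_norm]
    linarith
  · exact fun y hy => (hball y (hsub hy)).1
  · exact le_of_eq (by field_simp)
  · exact fun y hy => (hA.contDiffAt
      (hU.mem_nhds (hball y (hsub hy)).2.2.1)).differentiableAt (by norm_num)
  · exact fun y hy => (hball y (hsub hy)).2.1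
  · exact fun y hy z hz => by
      simpa only [dist_eq_norm] using
        hC.dist_le_mul y (hball y (hsub hy)).2.2.2 z (hball z (hsub hz)).2.2.2
  · exact fun y hy => hflat y (hball y (hsub hy)).2.2.1

/-- A flat connection form on a simply connected open set has global parallel sections with
arbitrary value at a given point. -/
theorem exists_isParallelOn_of_simplyConnected [CompleteSpace V] {A : E → E →L[ℝ] V →L[ℝ] V}
    {U : Set E} (hU : IsOpen U) [SimplyConnectedSpace U] (hA : ContDiffOn ℝ 2 A U)
    (hflat : ∀ x ∈ U, IsFlatAt A x) {x₀ : E} (hx₀ : x₀ ∈ U) (v₀ : V) :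
    ∃ F : E → V, F x₀ = v₀ ∧ IsParallelOn A F U := by
  have : LocallyPathConnectedSpace U := hU.locallyPathConnectedSpace
  choose r hr hrU hM hsol using fun i : U =>
    exists_ball_forall_exists_isParallelOn hU hA hflat i.2
  choose M hM using hM
  have hsol' : ∀ (i : U) (p : E) (v : V), ∃ F : E → V, p ∈ Metric.ball (i : E) (r i) →
      F p = v ∧ IsParallelOn A F (Metric.ball i (r i)) := fun i p v => by
    by_cases hp : p ∈ Metric.ball (i : E) (r i)
    · obtain ⟨F, hF⟩ := hsol i p hp v
      exact ⟨F, fun _ => hF⟩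
    · exact ⟨fun _ => v, fun h => absurd h hp⟩
  choose sol hsol using hsol'
  have hmem : ∀ i : U, (i : E) ∈ Metric.ball (i : E) (r i) := fun i => Metric.mem_ball_self (hr i)
  have huniq : ∀ (i : U) {F G : E → V} {p q : E}, IsParallelOn A F (Metric.ball i (r i)) →
      IsParallelOn A G (Metric.ball i (r i)) → p ∈ Metric.ball (i : E) (r i) → F p = G p →
      q ∈ Metric.ball (i : E) (r i) → F q = G q := fun i F G p q hF hG hp h hq =>
    hF.eqOn_of_convex hG (convex_ball _ _) (hM i) hp h hq
  obtain ⟨F, hF₀, hF⟩ := exists_section_of_locally_constant_transport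
    (B := fun i : U => Subtype.val ⁻¹' Metric.ball (i : E) (r i))
    (fun i => Metric.isOpen_ball.preimage continuous_subtype_val) hmem
    (fun i x v => sol i i v x) (fun i x v => sol i x v i)
    (fun i x hx v => by
      have h := hsol i x (sol i i v x) hx
      have h' := hsol i i v (hmem i)
      exact (huniq i h.2 h'.2 hx h.1 (hmem i)).trans h'.1)
    (fun i x hx v => by
      have h := hsol i x v hx
      have h' := hsol i i (sol i x v i) (hmem i)
      exact (huniq i h'.2 h.2 (hmem i) h'.1 hx).trans h.1)
    (fun i v => (hsol i i v (hmem i)).1)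
    (fun i j x hx v => by
      have hi := hsol i i v (hmem i)
      have hj := hsol j x (sol i i v x) hx.2
      filter_upwards [(Metric.isOpen_ball.preimage continuous_subtype_val).mem_nhds hx.1,
        (Metric.isOpen_ball.preimage continuous_subtype_val).mem_nhds hx.2] with y hyi hyj
      have hy := hsol j y (sol i i v y) hyj
      have heq : sol i i v y = sol j x (sol i i v x) y :=
        (hi.2.mono inter_subset_left).eqOn_of_convex (hj.2.mono inter_subset_right)
          ((convex_ball _ _).inter (convex_ball _ _)) (fun z hz => hM i z hz.1) hx hj.1.symm
          ⟨hyi, hyj⟩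
      exact huniq j hy.2 hj.2 hyj (hy.1.trans heq) (hmem j))
    ⟨x₀, hx₀⟩ v₀
  classical
  refine ⟨fun y => if h : y ∈ U then F ⟨y, h⟩ else 0, by simp [hx₀, hF₀], fun x hx => ?_⟩
  have hloc := hsol ⟨x, hx⟩ x (F ⟨x, hx⟩) (hmem ⟨x, hx⟩)
  have hev : (fun y => if h : y ∈ U then F ⟨y, h⟩ else 0) =ᶠ[𝓝 x]
      sol ⟨x, hx⟩ x (F ⟨x, hx⟩) := by
    have h := hF ⟨x, hx⟩
    rw [nhds_subtype_eq_comap, eventually_comap] at h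
    filter_upwards [h, hU.mem_nhds hx] with y hy hyU
    simpa [hyU] using hy ⟨y, hyU⟩ rfl
  have hder := (hloc.2 x (hmem ⟨x, hx⟩)).congr_of_eventuallyEq hev
  rw [hloc.1] at hder
  simpa only [dif_pos hx] using hder

theorem IsParallelOn.contDiffOn {A : E → E →L[ℝ] V →L[ℝ] V} {F : E → V} {U : Set E}
    (hF : IsParallelOn A F U) (hU : IsOpen U) (hA : ContDiffOn ℝ (⊤ : ℕ∞) A U) :
    ContDiffOn ℝ (⊤ : ℕ∞) F U := by
  rw [contDiffOn_infty]
  intro m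
  induction m with
  | zero =>
    exact contDiffOn_zero.2 fun x hx => (hF x hx).continuousAt.continuousWithinAt
  | succ m ih =>
    rw [Nat.cast_succ, contDiffOn_succ_iff_fderiv_of_isOpen hU]
    refine ⟨fun x hx => (hF x hx).differentiableAt.differentiableWithinAt, by simp, ?_⟩
    have hflip : ContDiffOn ℝ m (fun x => (A x).flip) U :=
      (ContinuousLinearMap.flipₗᵢ ℝ E V V).contDiff.comp_contDiffOn
        (hA.of_le (by exact_mod_cast le_top))
    exact (hflip.clm_apply ih).congr fun x hx => (hF x hx).fderiv

/-- A parallel section on a connected open set vanishing at one point vanishes. -/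
theorem IsParallelOn.eqOn_zero {A : E → E →L[ℝ] V →L[ℝ] V} {F : E → V} {U : Set E}
    (hF : IsParallelOn A F U) (hU : IsOpen U) (hUc : IsPreconnected U) (hA : ContinuousOn A U)
    {p : E} (hp : p ∈ U) (hFp : F p = 0) : ∀ q ∈ U, F q = 0 := by
  have hopen : IsOpen {x | x ∈ U ∧ F x = 0} := by
    rw [isOpen_iff_mem_nhds]
    rintro x ⟨hx, hFx⟩
    have hM : ∀ᶠ y in 𝓝 x, ‖A y‖ ≤ ‖A x‖ + 1 :=
      (hA.continuousAt (hU.mem_nhds hx)).norm.eventually_le_const (lt_add_one _)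
    obtain ⟨ε, hε, hball⟩ := Metric.eventually_nhds_iff_ball.1 (hM.and (hU.eventually_mem hx))
    filter_upwards [Metric.ball_mem_nhds x hε] with y hy
    exact ⟨(hball y hy).2, (hF.mono fun z hz => (hball z hz).2).eqOn_zero_of_convex
      (convex_ball x ε) (fun z hz => (hball z hz).1) (Metric.mem_ball_self hε) hFx y hy⟩
  refine fun q hq => (hUc.subset_of_closure_inter_subset hopen ⟨p, hp, hp, hFp⟩ ?_ hq).2
  rintro x ⟨hxc, hx⟩
  refine ⟨hx, ?_⟩
  have h := mem_closure_image (hF x hx).continuousAt hxc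
  have hsub : image F {x | x ∈ U ∧ F x = 0} ⊆ {0} := by
    rintro _ ⟨y, hy, rfl⟩
    exact hy.2
  simpa using closure_mono hsub h

theorem IsParallelOn.sum_smul {ι : Type*} [Fintype ι] {A : E → E →L[ℝ] V →L[ℝ] V}
    {F : ι → E → V} {s : Set E} (hF : ∀ i, IsParallelOn A (F i) s) (c : ι → ℝ) :
    IsParallelOn A (fun x => ∑ i, c i • F i x) s := fun x hx => by
  simpa only [map_sum, map_smul] using
    HasFDerivAt.fun_sum fun i _ => (hF i x hx).fun_const_smul (c i)

/-- The curvature of a connection form annihilates the values of parallel sections. -/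
theorem IsParallelOn.curvature_apply_eq {A : E → E →L[ℝ] V →L[ℝ] V} {F : E → V} {U : Set E}
    (hF : IsParallelOn A F U) (hU : IsOpen U) {x : E} (hx : x ∈ U)
    (hA : DifferentiableAt ℝ A x) (u w : E) :
    fderiv ℝ A x u w (F x) + A x w (A x u (F x)) =
      fderiv ℝ A x w u (F x) + A x u (A x w (F x)) := by
  have hflip : HasFDerivAt (fun y => (A y).flip) _ x :=
    (ContinuousLinearMap.flipₗᵢ ℝ E V V).toContinuousLinearEquiv.hasFDerivAt.comp x
      hA.hasFDerivAt
  have h := second_derivative_symmetric_of_eventually_of_real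
    (Filter.eventually_of_mem (hU.mem_nhds hx) hF) (hflip.clm_apply (hF x hx)) u w
  simp at h
  rw [add_comm, h, add_comm]

end

section

open Set Filter Topology

set_option maxSynthPendingDepth 3

variable {n : ℕ}

/-- The form `(u, v) ↦ uᵢ vₖ b`, where `v = (a, ω)` is a value of a function together with
its differential. -/
noncomputable def jetForm (i k : Fin n) (b : ℝ × (Fin n → ℝ)) :
    (Fin n → ℝ) →L[ℝ] (ℝ × (Fin n → ℝ)) →L[ℝ] (ℝ × (Fin n → ℝ)) :=
  (ContinuousLinearMap.proj (R := ℝ) (φ := fun _ : Fin n => ℝ) i).smulRight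
    (((ContinuousLinearMap.proj (R := ℝ) (φ := fun _ : Fin n => ℝ) k).comp
      (ContinuousLinearMap.snd ℝ ℝ (Fin n → ℝ))).smulRight b)

/-- The form `(u, (a, ω)) ↦ (0, ∑ cᵏᵢⱼ uᵢ ωₖ)`. -/
noncomputable def christoffelForm (c : Fin n → Fin n → Fin n → ℝ) :
    (Fin n → ℝ) →L[ℝ] (ℝ × (Fin n → ℝ)) →L[ℝ] (ℝ × (Fin n → ℝ)) :=
  ∑ k, ∑ i, ∑ j, c k i j • jetForm i k (0, Pi.single j 1)

/-- The connection form whose parallel sections are the pairs `(f, df)` with `f` affine. -/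
noncomputable def affineForm (Γ : Fin n → Fin n → Fin n → (Fin n → ℝ) → ℝ) (x : Fin n → ℝ) :
    (Fin n → ℝ) →L[ℝ] (ℝ × (Fin n → ℝ)) →L[ℝ] (ℝ × (Fin n → ℝ)) :=
  ∑ k, jetForm k k (1, 0) + christoffelForm fun k i j => Γ k i j x

theorem christoffelForm_apply (c : Fin n → Fin n → Fin n → ℝ) (u : Fin n → ℝ)
    (v : ℝ × (Fin n → ℝ)) :
    christoffelForm c u v = (0, fun j => ∑ k, ∑ i, c k i j * (u i * v.2 k)) := by
  ext l
  · simp [christoffelForm, jetForm, Prod.fst_sum]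
  · simp [christoffelForm, jetForm, Prod.snd_sum, Pi.single_apply]

theorem affineForm_apply (Γ : Fin n → Fin n → Fin n → (Fin n → ℝ) → ℝ) (x u : Fin n → ℝ)
    (v : ℝ × (Fin n → ℝ)) :
    affineForm Γ x u v =
      (∑ k, u k * v.2 k, fun j => ∑ k, ∑ i, Γ k i j x * (u i * v.2 k)) := by
  rw [affineForm, add_apply, add_apply, christoffelForm_apply]
  ext l <;> simp [jetForm, Prod.fst_sum, Prod.snd_sum]

theorem contDiffOn_affineForm {Γ : Fin n → Fin n → Fin n → (Fin n → ℝ) → ℝ} {U : Set (Fin n → ℝ)}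
    (hΓ : ∀ k i j, ContDiffOn ℝ (⊤ : ℕ∞) (Γ k i j) U) :
    ContDiffOn ℝ (⊤ : ℕ∞) (affineForm Γ) U :=
  contDiffOn_const.add (ContDiffOn.sum fun k _ => ContDiffOn.sum fun i _ =>
    ContDiffOn.sum fun j _ => (hΓ k i j).smul contDiffOn_const)

theorem fderiv_affineForm {Γ : Fin n → Fin n → Fin n → (Fin n → ℝ) → ℝ} {x : Fin n → ℝ}
    (hΓ : ∀ k i j, DifferentiableAt ℝ (Γ k i j) x) (u : Fin n → ℝ) :
    fderiv ℝ (affineForm Γ) x u = christoffelForm fun k i j => fderiv ℝ (Γ k i j) x u := by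
  have h : HasFDerivAt (affineForm Γ) _ x :=
    (HasFDerivAt.fun_sum fun k _ => HasFDerivAt.fun_sum fun i _ => HasFDerivAt.fun_sum fun j _ =>
      (hΓ k i j).hasFDerivAt.smul_const (jetForm i k (0, Pi.single j 1))).const_add
        (∑ k, jetForm k k (1, 0))
  rw [h.fderiv]
  simp [christoffelForm]

theorem clm_apply_eq_sum_single (L : (Fin n → ℝ) →L[ℝ] ℝ) (u : Fin n → ℝ) :
    L u = ∑ i, u i * L (Pi.single i 1) := by
  conv_lhs => rw [pi_eq_sum_univ' u]
  simp [map_sum]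

theorem affineForm_curvature_snd {Γ : Fin n → Fin n → Fin n → (Fin n → ℝ) → ℝ} {x : Fin n → ℝ}
    (hΓ : ∀ k i j, DifferentiableAt ℝ (Γ k i j) x) (u w : Fin n → ℝ) (v : ℝ × (Fin n → ℝ))
    (l : Fin n) :
    (fderiv ℝ (affineForm Γ) x u w v + affineForm Γ x w (affineForm Γ x u v)).2 l =
      ∑ k, ∑ i, ∑ j, u i * w j * v.2 k *
        (pd i (Γ k j l) x + ∑ m, Γ k i m x * Γ m j l x) := by
  simp only [fderiv_affineForm hΓ, christoffelForm_apply, affineForm_apply, Prod.snd_add,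
    Pi.add_apply, mul_add, Finset.sum_add_distrib, pd]
  congr 1
  · refine Finset.sum_congr rfl fun k _ => ?_
    rw [Finset.sum_comm]
    refine Finset.sum_congr rfl fun j _ => ?_
    rw [clm_apply_eq_sum_single (fderiv ℝ (Γ k j l) x) u, Finset.sum_mul]
    exact Finset.sum_congr rfl fun i _ => by ring
  · simp only [Finset.mul_sum]
    calc _ = ∑ m, ∑ j, ∑ k, ∑ i, u i * w j * v.2 k * (Γ k i m x * Γ m j l x) := by
          refine Finset.sum_congr rfl fun m _ => Finset.sum_congr rfl fun j _ =>
            Finset.sum_congr rfl fun k _ => Finset.sum_congr rfl fun i _ => by ring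
      _ = ∑ k, ∑ m, ∑ j, ∑ i, u i * w j * v.2 k * (Γ k i m x * Γ m j l x) := by
          rw [Finset.sum_comm (s := Finset.univ (α := Fin n))]
          refine (Finset.sum_congr rfl fun j _ => Finset.sum_comm).trans ?_
          rw [Finset.sum_comm]
          exact Finset.sum_congr rfl fun k _ => Finset.sum_comm
      _ = _ := by
          refine Finset.sum_congr rfl fun k _ => ?_
          refine (Finset.sum_congr rfl fun m _ => Finset.sum_comm).trans ?_
          rw [Finset.sum_comm]
          exact Finset.sum_congr rfl fun i _ => Finset.sum_comm

theorem isFlatAt_affineForm_iff {Γ : Fin n → Fin n → Fin n → (Fin n → ℝ) → ℝ} {x : Fin n → ℝ}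
    (hΓ : ∀ k i j, DifferentiableAt ℝ (Γ k i j) x) (hsymm : ∀ k i j, Γ k i j x = Γ k j i x) :
    IsFlatAt (affineForm Γ) x ↔ ∀ k l i j, curv Γ k l i j x = 0 := by
  have hcurv : ∀ k l i j, curv Γ k l i j x =
      (pd i (Γ k j l) x + ∑ m, Γ k i m x * Γ m j l x) -
        (pd j (Γ k i l) x + ∑ m, Γ k j m x * Γ m i l x) := fun k l i j => by
    rw [curv, Finset.sum_sub_distrib]
    ring
  constructor
  · intro h k l i j
    have h' := congrArg (fun v : ℝ × (Fin n → ℝ) => v.2 l)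
      (h (Pi.single i 1) (Pi.single j 1) (0, Pi.single k 1))
    simp only [affineForm_curvature_snd hΓ] at h'
    rw [hcurv, sub_eq_zero]
    simpa [Pi.single_apply] using h'
  · intro h u w v
    refine Prod.ext ?_ (funext fun l => ?_)
    · simp only [fderiv_affineForm hΓ, christoffelForm_apply, affineForm_apply, Prod.fst_add,
        zero_add, Finset.mul_sum]
      refine (Finset.sum_congr rfl fun j _ => Finset.sum_comm).trans ?_
      rw [Finset.sum_comm]
      refine Finset.sum_congr rfl fun i _ => ?_
      rw [Finset.sum_comm]
      refine Finset.sum_congr rfl fun k _ => Finset.sum_congr rfl fun j _ => ?_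
      rw [hsymm k i j]
      ring
    · rw [affineForm_curvature_snd hΓ, affineForm_curvature_snd hΓ]
      refine Finset.sum_congr rfl fun k _ => ?_
      rw [Finset.sum_comm]
      refine Finset.sum_congr rfl fun j _ => Finset.sum_congr rfl fun i _ => ?_
      have h' := h k l i j
      rw [hcurv, sub_eq_zero] at h'
      rw [h']
      ring

/-- The pair `(g, dg)` of an affine function is parallel for `affineForm`. -/
theorem isParallelOn_affineForm_of_dsym_eq_zero
    {Γ : Fin n → Fin n → Fin n → (Fin n → ℝ) → ℝ} {U : Set (Fin n → ℝ)} (hU : IsOpen U)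
    {g : (Fin n → ℝ) → ℝ} (hg : ContDiffOn ℝ (⊤ : ℕ∞) g U)
    (h : ∀ x ∈ U, ∀ i j, dsym Γ (fun y k => fderiv ℝ g y (Pi.single k 1)) i j x = 0) :
    IsParallelOn (affineForm Γ) (fun y => (g y, fun k => fderiv ℝ g y (Pi.single k 1))) U := by
  intro x hx
  have hgx : ContDiffAt ℝ 2 g x :=
    (hg.contDiffAt (hU.mem_nhds hx)).of_le (WithTop.coe_le_coe.2 le_top)
  have hg1 : DifferentiableAt ℝ g x := hgx.differentiableAt (by norm_num)
  have hg2 : DifferentiableAt ℝ (fderiv ℝ g) x :=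
    (hgx.fderiv_right (m := 1) (by norm_num)).differentiableAt (by simp)
  have hsymm : IsSymmSndFDerivAt ℝ g x :=
    hgx.isSymmSndFDerivAt (by simp)
  have hcomp : ∀ k, HasFDerivAt (fun y => fderiv ℝ g y (Pi.single k 1))
      ((fderiv ℝ (fderiv ℝ g) x).flip (Pi.single k 1)) x := fun k => by
    have h := hg2.hasFDerivAt.clm_apply (hasFDerivAt_const (Pi.single k 1 : Fin n → ℝ) x)
    exact h.congr_fderiv (by ext; simp)
  have hsecond : ∀ i j, fderiv ℝ (fderiv ℝ g) x (Pi.single i 1) (Pi.single j 1) =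
      ∑ k, Γ k i j x * fderiv ℝ g x (Pi.single k 1) := fun i j => by
    have h' := h x hx i j
    simp only [dsym, pd, (hcomp _).fderiv, ContinuousLinearMap.flip_apply] at h'
    rw [hsymm (Pi.single j 1) (Pi.single i 1)] at h'
    linarith
  refine (hg1.hasFDerivAt.prodMk (hasFDerivAt_pi.2 hcomp)).congr_fderiv ?_
  refine ContinuousLinearMap.ext fun u => Prod.ext ?_ (funext fun j => ?_)
  · rw [ContinuousLinearMap.flip_apply, affineForm_apply]
    exact clm_apply_eq_sum_single _ _
  · rw [ContinuousLinearMap.flip_apply, affineForm_apply]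
    simp only [ContinuousLinearMap.prod_apply, ContinuousLinearMap.pi_apply]
    rw [clm_apply_eq_sum_single, Finset.sum_comm]
    refine Finset.sum_congr rfl fun i _ => ?_
    rw [ContinuousLinearMap.flip_apply, hsecond, Finset.mul_sum]
    exact Finset.sum_congr rfl fun k _ => by ring

theorem IsParallelOn.fderiv_fst_single {Γ : Fin n → Fin n → Fin n → (Fin n → ℝ) → ℝ}
    {U : Set (Fin n → ℝ)} {F : (Fin n → ℝ) → ℝ × (Fin n → ℝ)}
    (hF : IsParallelOn (affineForm Γ) F U) {x : Fin n → ℝ} (hx : x ∈ U) (k : Fin n) :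
    fderiv ℝ (fun y => (F y).1) x (Pi.single k 1) = (F x).2 k := by
  rw [(hF x hx).fst.fderiv]
  simp [affineForm_apply, Pi.single_apply]

/-- The first component of a parallel section of `affineForm` is an affine function. -/
theorem IsParallelOn.dsym_fst_eq_zero {Γ : Fin n → Fin n → Fin n → (Fin n → ℝ) → ℝ}
    {U : Set (Fin n → ℝ)} (hU : IsOpen U) (hsymm : ∀ k i j x, Γ k i j x = Γ k j i x)
    {F : (Fin n → ℝ) → ℝ × (Fin n → ℝ)} (hF : IsParallelOn (affineForm Γ) F U)
    {x : Fin n → ℝ} (hx : x ∈ U) (i j : Fin n) :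
    dsym Γ (fun y k => fderiv ℝ (fun z => (F z).1) y (Pi.single k 1)) i j x = 0 := by
  have hpd : ∀ i j, pd i (fun y => fderiv ℝ (fun z => (F z).1) y (Pi.single j 1)) x =
      ∑ k, Γ k i j x * (F x).2 k := fun i j => by
    have hev : (fun y => fderiv ℝ (fun z => (F z).1) y (Pi.single j 1)) =ᶠ[𝓝 x]
        fun y => (F y).2 j := by
      filter_upwards [hU.mem_nhds hx] with y hy using hF.fderiv_fst_single hy j
    rw [pd, hev.fderiv_eq, (hasFDerivAt_pi'.1 (hF x hx).snd j).fderiv]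
    simp [affineForm_apply, Pi.single_apply]
  simp only [dsym, hpd, hF.fderiv_fst_single hx, hsymm _ j i]
  ring

theorem IsParallelOn.eq_zero_of_fst_eq_zero {Γ : Fin n → Fin n → Fin n → (Fin n → ℝ) → ℝ}
    {U : Set (Fin n → ℝ)} (hU : IsOpen U) {F : (Fin n → ℝ) → ℝ × (Fin n → ℝ)}
    (hF : IsParallelOn (affineForm Γ) F U) (h : ∀ x ∈ U, (F x).1 = 0)
    {x : Fin n → ℝ} (hx : x ∈ U) : F x = 0 := by
  refine Prod.ext (h x hx) (funext fun k => ?_)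
  have hev : (fun y => (F y).1) =ᶠ[𝓝 x] fun _ => 0 := by
    filter_upwards [hU.mem_nhds hx] with y hy using h y hy
  rw [← hF.fderiv_fst_single hx k, hev.fderiv_eq]
  simp

/-- A connection with `n + 1` independent affine functions is flat. -/
theorem curv_eq_zero_of_linearIndependent_affine {Γ : Fin n → Fin n → Fin n → (Fin n → ℝ) → ℝ}
    {U : Set (Fin n → ℝ)} (hU : IsOpen U) (hUconn : IsPreconnected U)
    (hΓ : IsTorsionFreeConn U Γ) {f : Fin (n + 1) → (Fin n → ℝ) → ℝ}
    (hf : ∀ m, ContDiffOn ℝ (⊤ : ℕ∞) (f m) U ∧ ∀ x ∈ U, ∀ i j,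
      dsym Γ (fun y k => fderiv ℝ (f m) y (Pi.single k 1)) i j x = 0)
    (hind : ∀ c : Fin (n + 1) → ℝ, (∀ x ∈ U, (∑ m, c m * f m x) = 0) → c = 0)
    {x : Fin n → ℝ} (hx : x ∈ U) (k l i j : Fin n) : curv Γ k l i j x = 0 := by
  have hA := contDiffOn_affineForm hΓ.1
  have hdiff : ∀ k i j, DifferentiableAt ℝ (Γ k i j) x := fun k i j =>
    ((hΓ.1 k i j).contDiffAt (hU.mem_nhds hx)).differentiableAt (by simp)
  have hF := fun m => isParallelOn_affineForm_of_dsym_eq_zero hU (hf m).1 (hf m).2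
  let T := Fintype.linearCombination ℝ fun m =>
    ((f m x, fun k => fderiv ℝ (f m) x (Pi.single k 1)) : ℝ × (Fin n → ℝ))
  have hT : Function.Injective T := by
    refine (injective_iff_map_eq_zero T).2 fun c hc => hind c fun y hy => ?_
    have h := (IsParallelOn.sum_smul hF c).eqOn_zero hU hUconn hA.continuousOn hx
      (by simpa [T, Fintype.linearCombination_apply] using hc) y hy
    simpa [Prod.fst_sum] using congrArg Prod.fst h
  have hTs : Function.Surjective T :=
    (LinearMap.injective_iff_surjective_of_finrank_eq_finrank (by simp [add_comm])).1 hT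
  refine (isFlatAt_affineForm_iff hdiff fun k i j => hΓ.2 k i j x).1 (fun u w v => ?_) k l i j
  obtain ⟨c, rfl⟩ := hTs v
  simpa only [T, Fintype.linearCombination_apply] using
    (IsParallelOn.sum_smul hF c).curvature_apply_eq hU hx
      ((hA.contDiffAt (hU.mem_nhds hx)).differentiableAt (by simp)) u w

end

/-- on a connected simply connected open set `U`, the space of affine
functions of a torsion-free connection `Γ` has dimension `n + 1` (expressed by the
existence of `n + 1` affine functions, linearly independent on `U`, spanning all affine
functions on `U`) iff `Γ` is flat, i.e. its curvature vanishes identically on `U`. -/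
theorem statement15 {n : ℕ} (hn : 2 ≤ n)
    (U : Set (Fin n → ℝ)) (hU : IsOpen U) (hUconn : IsConnected U)
    (hUsc : SimplyConnectedSpace U)
    (Γ : Fin n → Fin n → Fin n → (Fin n → ℝ) → ℝ) (hΓ : IsTorsionFreeConn U Γ) :
    (∃ f : Fin (n + 1) → (Fin n → ℝ) → ℝ,
      (∀ m, ContDiffOn ℝ (⊤ : ℕ∞) (f m) U ∧
        ∀ x ∈ U, ∀ i j,
          dsym Γ (fun y k => fderiv ℝ (f m) y (Pi.single k 1)) i j x = 0) ∧
      (∀ c : Fin (n + 1) → ℝ, (∀ x ∈ U, (∑ m, c m * f m x) = 0) → c = 0) ∧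
      (∀ g : (Fin n → ℝ) → ℝ, ContDiffOn ℝ (⊤ : ℕ∞) g U →
        (∀ x ∈ U, ∀ i j,
          dsym Γ (fun y k => fderiv ℝ g y (Pi.single k 1)) i j x = 0) →
        ∃ c : Fin (n + 1) → ℝ, ∀ x ∈ U, g x = ∑ m, c m * f m x)) ↔
    (∀ x ∈ U, ∀ k l i j, curv Γ k l i j x = 0) := by
  refine ⟨fun ⟨f, hf, hind, _⟩ x hx => curv_eq_zero_of_linearIndependent_affine hU
    hUconn.isPreconnected hΓ hf hind hx, fun hcurv => ?_⟩
  obtain ⟨x₀, hx₀⟩ := hUconn.nonempty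
  have hA := contDiffOn_affineForm hΓ.1
  have hflat : ∀ x ∈ U, IsFlatAt (affineForm Γ) x := fun x hx =>
    (isFlatAt_affineForm_iff (fun k i j => ((hΓ.1 k i j).contDiffAt
      (hU.mem_nhds hx)).differentiableAt (by simp)) fun k i j => hΓ.2 k i j x).2 (hcurv x hx)
  let b := Module.finBasisOfFinrankEq ℝ (ℝ × (Fin n → ℝ)) (n := n + 1) (by simp [add_comm])
  choose F hF₀ hF using fun m => exists_isParallelOn_of_simplyConnected hU
    (hA.of_le (WithTop.coe_le_coe.2 le_top)) hflat hx₀ (b m)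
  refine ⟨fun m y => (F m y).1, fun m => ⟨((hF m).contDiffOn hU hA).fst, fun x hx i j =>
    (hF m).dsym_fst_eq_zero hU hΓ.2 hx i j⟩, fun c hc => ?_, fun g hg hgs => ?_⟩
  · have h := (IsParallelOn.sum_smul hF c).eq_zero_of_fst_eq_zero hU
      (fun x hx => by simpa [Prod.fst_sum] using hc x hx) hx₀
    simp only [hF₀] at h
    exact funext (Fintype.linearIndependent_iff.1 b.linearIndependent c h)
  · have hG := isParallelOn_affineForm_of_dsym_eq_zero hU hg hgs
    let c := b.repr (g x₀, fun k => fderiv ℝ g x₀ (Pi.single k 1))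
    refine ⟨c, fun x hx => ?_⟩
    have h := (hG.sub (IsParallelOn.sum_smul hF c)).eqOn_zero hU hUconn.isPreconnected
      hA.continuousOn hx₀ (by simp only [hF₀, c, b.sum_repr, sub_self]) x hx
    simpa [Prod.fst_sum, sub_eq_zero] using congrArg Prod.fst h
end

section
/- Let ⟨ω₁, …, ω_d⟩ be a d-web of hypersurfaces on U with d ≥ n + 2. Then the web is locally linearizable at a point p ∈ U (there is a neighborhood V of p and a diffeomorphism of V onto an open subset of ℝⁿ mapping every leaf of every web foliation into an affine hyperplane) if and only if, on some neighborhood of p, the web is geodesic for a torsion-free affine connection Γ that is projectively equivalent to a flat connection (a torsion-free connection whose curvature Rᵏₗᵢⱼ = ∂ᵢΓᵏⱼₗ − ∂ⱼΓᵏᵢₗ + Σₘ(Γᵏᵢₘ Γᵐⱼₗ − Γᵏⱼₘ Γᵐᵢₗ) vanishes identically). -/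
open scoped BigOperators

/-- `y` lies in the leaf through `x` (within `V`) of the foliation defined by `ω`:
it is reachable from `x` by a `C¹` path in `V` everywhere tangent to `ker ω`. -/
def InLeaf {n : ℕ} (V : Set (Fin n → ℝ)) (ω : (Fin n → ℝ) → Fin n → ℝ)
    (x y : Fin n → ℝ) : Prop :=
  ∃ γ : ℝ → Fin n → ℝ, ContDiff ℝ 1 γ ∧ γ 0 = x ∧ γ 1 = y ∧
    (∀ t ∈ Set.Icc (0 : ℝ) 1, γ t ∈ V) ∧
    ∀ t ∈ Set.Icc (0 : ℝ) 1, (∑ k, ω (γ t) k * deriv (fun s => γ s k) t) = 0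

theorem norm_le_of_hasDerivWithinAt_unitInterval {F : Type*} [NormedAddCommGroup F]
    [NormedSpace ℝ F] {f f' : ℝ → F} {ε : ℝ} (hε : 0 ≤ ε)
    (hf : ∀ t ∈ Set.Icc (0 : ℝ) 1, HasDerivWithinAt f (f' t) (Set.Icc 0 1) t)
    (bound : ∀ t ∈ Set.Icc (0 : ℝ) 1, ‖f' t‖ ≤ ‖f t‖ + ε) :
    ∀ t ∈ Set.Icc (0 : ℝ) 1, ‖f t‖ ≤ 3 * (‖f 0‖ + ε) := by
  intro t ht
  have h := norm_le_gronwallBound_of_norm_deriv_right_le (f := f) (f' := f') (K := 1) (ε := ε)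
    (δ := ‖f 0‖) (a := 0) (b := 1) (fun s hs => (hf s hs).continuousWithinAt)
    (fun s hs => (hf s ⟨hs.1, hs.2.le⟩).mono_of_mem_nhdsWithin
      (Icc_mem_nhdsGE_of_mem hs)) le_rfl
    (fun s hs => by simpa using bound s ⟨hs.1, hs.2.le⟩) t ht
  rw [gronwallBound_of_K_ne_0 one_ne_zero] at h
  have he : Real.exp t ≤ 3 :=
    (Real.exp_le_exp.2 ht.2).trans (Real.exp_one_lt_d9.le.trans (by norm_num))
  simp only [sub_zero, one_mul, div_one] at h
  nlinarith [norm_nonneg (f 0)]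

theorem exists_hasDerivWithinAt_mul_right {𝔸 : Type*} [NormedRing 𝔸] [NormedAlgebra ℝ 𝔸]
    [CompleteSpace 𝔸] {g : ℝ → 𝔸} (hg : ContinuousOn g (Set.Icc 0 1))
    (hb : ∀ t ∈ Set.Icc (0 : ℝ) 1, ‖g t‖ * (‖(1 : 𝔸)‖ + 1) ≤ 1) :
    ∃ a : ℝ → 𝔸, a 0 = 1 ∧
      ∀ t ∈ Set.Icc (0 : ℝ) 1, HasDerivWithinAt a (a t * g t) (Set.Icc 0 1) t := by
  have hg1 : ∀ t ∈ Set.Icc (0 : ℝ) 1, ‖g t‖ ≤ 1 := fun t ht => by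
    nlinarith [hb t ht, norm_nonneg (g t), norm_nonneg (1 : 𝔸)]
  have hpl : IsPicardLindelof (fun t y => y * g t)
      (⟨0, by simp⟩ : Set.Icc (0 : ℝ) 1) (1 : 𝔸) 1 0 1 1 := by
    refine ⟨fun t ht => ?_, fun y _ => continuousOn_const.mul hg, fun t ht y hy => ?_, by simp⟩
    · refine LipschitzOnWith.of_dist_le_mul fun y _ z _ => ?_
      rw [dist_eq_norm, dist_eq_norm, ← sub_mul]
      refine (norm_mul_le _ _).trans ?_
      have := hg1 t ht
      push_cast
      nlinarith [norm_nonneg (y - z)]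
    · have hy' : ‖y‖ ≤ ‖(1 : 𝔸)‖ + 1 := by
        have h1 : ‖y - 1‖ ≤ 1 := by simpa [dist_eq_norm] using hy
        have h2 := norm_add_le (y - 1) 1
        rw [sub_add_cancel] at h2
        linarith
      refine (norm_mul_le _ _).trans ?_
      have := hb t ht
      push_cast
      nlinarith [norm_nonneg (g t)]
  exact hpl.exists_eq_forall_mem_Icc_hasDerivWithinAt₀

theorem exists_ball_taylor_bounds {E F : Type*} [NormedAddCommGroup E] [NormedSpace ℝ E]
    [NormedAddCommGroup F] [NormedSpace ℝ F] {G : E → F} {p : E} {s : Set E} (hs : IsOpen s)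
    (hp : p ∈ s) (hG : ContDiffOn ℝ 2 G s) :
    ∃ M : ℝ, 0 ≤ M ∧ ∃ r > 0, Metric.ball p r ⊆ s ∧
      (∀ x ∈ Metric.ball p r, ‖G x‖ ≤ M) ∧
      (∀ x ∈ Metric.ball p r, ∀ y ∈ Metric.ball p r, ‖G y - G x‖ ≤ M * ‖y - x‖) ∧
      ∀ x ∈ Metric.ball p r, ∀ y ∈ Metric.ball p r,
        ‖G y - G x - fderiv ℝ G x (y - x)‖ ≤ M * ‖y - x‖ * ‖y - x‖ := by
  have hGp : ContDiffAt ℝ 2 G p := hG.contDiffAt (hs.mem_nhds hp)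
  obtain ⟨K₁, t₁, ht₁, hK₁⟩ := (hGp.of_le (by norm_num)).exists_lipschitzOnWith
  obtain ⟨K₂, t₂, ht₂, hK₂⟩ :=
    (hGp.fderiv_right (m := 1) (by norm_num)).exists_lipschitzOnWith
  have h3 : ∀ᶠ x in nhds p, ‖G x‖ < ‖G p‖ + 1 :=
    hGp.continuousAt.norm.eventually_lt_const (by linarith)
  obtain ⟨r, hr, hball⟩ := Metric.mem_nhds_iff.1
    (Filter.inter_mem (Filter.inter_mem (hs.mem_nhds hp) h3) (Filter.inter_mem ht₁ ht₂))
  refine ⟨‖G p‖ + 1 + K₁ + K₂, by positivity, r, hr, fun x hx => (hball hx).1.1,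
    fun x hx => ?_, fun x hx y hy => ?_, fun x hx y hy => ?_⟩
  · have : ‖G x‖ < ‖G p‖ + 1 := (hball hx).1.2
    have := K₁.2
    have := K₂.2
    linarith
  · have := hK₁.dist_le_mul y (hball hy).2.1 x (hball hx).2.1
    rw [dist_eq_norm, dist_eq_norm] at this
    refine this.trans (mul_le_mul_of_nonneg_right ?_ (norm_nonneg _))
    have := K₂.2
    have := norm_nonneg (G p)
    linarith
  · have hseg : segment ℝ x y ⊆ Metric.ball p r := (convex_ball p r).segment_subset hx hy
    have key := (convex_segment x y).norm_image_sub_le_of_norm_hasFDerivWithin_le'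
      (f := G) (f' := fderiv ℝ G) (φ := fderiv ℝ G x) (C := K₂ * ‖y - x‖)
      (fun z hz => ((hG.differentiableOn (by norm_num)).differentiableAt
        (hs.mem_nhds (hball (hseg hz)).1.1)).hasFDerivAt.hasFDerivWithinAt)
      (fun z hz => ?_) (left_mem_segment ℝ x y) (right_mem_segment ℝ x y)
    · refine key.trans ?_
      have := K₁.2
      have := norm_nonneg (G p)
      gcongr
      linarith
    · have h := hK₂.dist_le_mul z (hball (hseg hz)).2.2 x (hball hx).2.2
      rw [dist_eq_norm, dist_eq_norm] at h
      refine h.trans (mul_le_mul_of_nonneg_left ?_ K₂.2)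
      obtain ⟨a, b, ha, hb, hab, rfl⟩ := hz
      have : a • x + b • y - x = b • (y - x) := by
        rw [← eq_sub_iff_add_eq] at hab
        subst hab
        module
      rw [this, norm_smul, Real.norm_of_nonneg hb]
      nlinarith [norm_nonneg (y - x)]

/-- A flat algebra-valued connection form `G` admits local parallel sections: the overdetermined
system `dA = A · G` is solvable near `p` with `A p = 1`. -/
theorem exists_hasFDerivAt_mul_of_flat {E 𝔸 : Type*} [NormedAddCommGroup E] [NormedSpace ℝ E]
    [NormedRing 𝔸] [NormedAlgebra ℝ 𝔸] [CompleteSpace 𝔸] {G : E → E →L[ℝ] 𝔸} {s : Set E}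
    (hs : IsOpen s) {p : E} (hp : p ∈ s) (hG : ContDiffOn ℝ 2 G s)
    (hflat : ∀ x ∈ s, ∀ u v, G x u * G x v + fderiv ℝ G x u v = G x v * G x u + fderiv ℝ G x v u) :
    ∃ r > 0, Metric.ball p r ⊆ s ∧ ∃ A : E → 𝔸, A p = 1 ∧
      ∀ x ∈ Metric.ball p r, HasFDerivAt A ((ContinuousLinearMap.mul ℝ 𝔸 (A x)).comp (G x)) x := by
  obtain ⟨M, hM, r₀, hr₀, hsub, hb, hL, hT⟩ := exists_ball_taylor_bounds hs hp hG
  set N : ℝ := ‖(1 : 𝔸)‖ + 1 with hN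
  have hN1 : 1 ≤ N := by simp [hN]
  obtain ⟨r, hr, hrr, hr1, hMr⟩ : ∃ r > 0, r ≤ r₀ ∧ r ≤ 1 ∧ M * r * N ≤ 1 := by
    refine ⟨min r₀ (1 / (M * N + 1)), by positivity, min_le_left _ _, ?_, ?_⟩
    · refine (min_le_right _ _).trans ?_
      rw [div_le_one (by positivity)]
      nlinarith
    · have h1 : min r₀ (1 / (M * N + 1)) ≤ 1 / (M * N + 1) := min_le_right _ _
      have h2 : (1 / (M * N + 1)) * (M * N + 1) = 1 := by field_simp
      have : 0 ≤ M * N := by positivity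
      nlinarith [h1, h2, mul_le_mul_of_nonneg_left h1 this,
        (by positivity : 0 ≤ 1 / (M * N + 1))]
  have hmem : ∀ x : E, ‖x‖ < r → ∀ t ∈ Set.Icc (0 : ℝ) 1, p + t • x ∈ Metric.ball p r₀ := by
    intro x hx t ht
    rw [mem_ball_iff_norm, add_sub_cancel_left, norm_smul, Real.norm_of_nonneg ht.1]
    nlinarith [norm_nonneg x, ht.2]
  have hgb : ∀ x : E, ‖x‖ < r → ∀ t ∈ Set.Icc (0 : ℝ) 1, ∀ h : E, ‖G (p + t • x) h‖ ≤ M * ‖h‖ :=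
    fun x hx t ht h => (G (p + t • x)).le_of_opNorm_le (hb _ (hmem x hx t ht)) h
  have hGd : ∀ y ∈ Metric.ball p r₀, HasFDerivAt G (fderiv ℝ G y) y := fun y hy =>
    ((hG.differentiableOn (by norm_num)).differentiableAt (hs.mem_nhds (hsub hy))).hasFDerivAt
  have hGt : ∀ x : E, ‖x‖ < r → ∀ h : E, ∀ t ∈ Set.Icc (0 : ℝ) 1,
      HasDerivAt (fun t : ℝ => G (p + t • x) h) (fderiv ℝ G (p + t • x) x h) t := by
    intro x hx h t ht
    have h1 : HasDerivAt (fun t : ℝ => p + t • x) x t := by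
      simpa using ((hasDerivAt_id t).smul_const x).const_add p
    have h2 : HasDerivAt (fun t : ℝ => G (p + t • x)) (fderiv ℝ G (p + t • x) x) t :=
      (hGd _ (hmem x hx t ht)).comp_hasDerivAt t h1
    simpa using h2.clm_apply (hasDerivAt_const t h)
  have hex : ∀ x : E, ∃ a : ℝ → 𝔸, ‖x‖ < r → (a 0 = 1 ∧
      ∀ t ∈ Set.Icc (0 : ℝ) 1, HasDerivWithinAt a (a t * G (p + t • x) x) (Set.Icc 0 1) t) := by
    intro x
    by_cases hx : ‖x‖ < r
    · obtain ⟨a, ha⟩ := exists_hasDerivWithinAt_mul_right (g := fun t => G (p + t • x) x)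
        (fun t ht => (hGt x hx x t ht).continuousAt.continuousWithinAt) (fun t ht => by
          have := hgb x hx t ht x
          refine le_trans ?_ hMr
          gcongr
          exact this.trans (by gcongr))
      exact ⟨a, fun _ => ha⟩
    · exact ⟨0, fun h => absurd h hx⟩
  choose a ha using hex
  have hMr1 : M * r ≤ 1 := by nlinarith [mul_nonneg hM hr.le]
  have hg1 : ∀ x : E, ‖x‖ < r → ∀ t ∈ Set.Icc (0 : ℝ) 1, ‖G (p + t • x) x‖ ≤ 1 :=
    fun x hx t ht => (hgb x hx t ht x).trans (by nlinarith)
  have hab : ∀ x : E, ‖x‖ < r → ∀ t ∈ Set.Icc (0 : ℝ) 1, ‖a x t‖ ≤ 3 * N := by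
    intro x hx t ht
    refine (norm_le_of_hasDerivWithinAt_unitInterval le_rfl (ha x hx).2 (fun t ht => ?_) t ht).trans
      (by rw [(ha x hx).1]; simp [hN])
    refine (norm_mul_le _ _).trans ?_
    nlinarith [hg1 x hx t ht, norm_nonneg (a x t)]
  have hquad : ∀ x h : E, ‖x‖ < r → ‖x + h‖ < r →
      ‖a (x + h) 1 - a x 1 - a x 1 * G (p + x) h‖ ≤ 3 * (42 * N * N * (M * M + M) * ‖h‖ ^ 2) := by
    intro x h hx hxh
    have hsplit : ∀ t : ℝ, p + t • (x + h) = (p + t • x) + t • h := fun t => by module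
    have hth : ∀ t ∈ Set.Icc (0 : ℝ) 1, ‖t • h‖ ≤ ‖h‖ := fun t ht => by
      rw [norm_smul, Real.norm_of_nonneg ht.1]
      nlinarith [norm_nonneg h, ht.2]
    have hΔG : ∀ t ∈ Set.Icc (0 : ℝ) 1, ‖G (p + t • (x + h)) - G (p + t • x)‖ ≤ M * ‖h‖ := by
      intro t ht
      refine (hL _ (hmem x hx t ht) _ (hmem _ hxh t ht)).trans ?_
      rw [hsplit, add_sub_cancel_left]
      have := hth t ht
      gcongr
    have hΔg : ∀ t ∈ Set.Icc (0 : ℝ) 1,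
        ‖G (p + t • (x + h)) (x + h) - G (p + t • x) x‖ ≤ 2 * M * ‖h‖ := by
      intro t ht
      have e : G (p + t • (x + h)) (x + h) - G (p + t • x) x =
          (G (p + t • (x + h)) - G (p + t • x)) (x + h) + G (p + t • x) h := by
        simp only [sub_apply, map_add]; abel
      rw [e]
      have h1 := (G (p + t • (x + h)) - G (p + t • x)).le_of_opNorm_le (hΔG t ht) (x + h)
      have h2 := hgb x hx t ht h
      have h3 : M * ‖h‖ * ‖x + h‖ ≤ M * ‖h‖ * 1 := by gcongr; linarith
      linarith [norm_add_le ((G (p + t • (x + h)) - G (p + t • x)) (x + h)) (G (p + t • x) h)]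
    have hd : ∀ t ∈ Set.Icc (0 : ℝ) 1, ‖a (x + h) t - a x t‖ ≤ 3 * (6 * N * M * ‖h‖) := by
      intro t ht
      refine (norm_le_of_hasDerivWithinAt_unitInterval (f := fun t => a (x + h) t - a x t)
        (ε := 6 * N * M * ‖h‖) (by positivity)
        (fun t ht => ((ha _ hxh).2 t ht).sub ((ha x hx).2 t ht)) (fun t ht => ?_) t ht).trans
        (by simp [(ha x hx).1, (ha _ hxh).1])
      have e : a (x + h) t * G (p + t • (x + h)) (x + h) - a x t * G (p + t • x) x =
        (a (x + h) t - a x t) * G (p + t • x) x +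
          a (x + h) t * (G (p + t • (x + h)) (x + h) - G (p + t • x) x) := by noncomm_ring
      rw [e]
      refine (norm_add_le _ _).trans (add_le_add ((norm_mul_le _ _).trans ?_)
        ((norm_mul_le _ _).trans ?_))
      · nlinarith [hg1 x hx t ht, norm_nonneg (a (x + h) t - a x t)]
      · calc _ ≤ (3 * N) * (2 * M * ‖h‖) :=
              mul_le_mul (hab _ hxh t ht) (hΔg t ht) (norm_nonneg _) (by positivity)
          _ = _ := by ring
    have hder : ∀ t ∈ Set.Icc (0 : ℝ) 1, HasDerivWithinAt
        (fun t => a (x + h) t - a x t - t • (a x t * G (p + t • x) h))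
        ((a (x + h) t - a x t - t • (a x t * G (p + t • x) h)) * G (p + t • x) x +
          (a (x + h) t - a x t) * (G (p + t • (x + h)) (x + h) - G (p + t • x) x) +
          a x t * ((G (p + t • (x + h)) - G (p + t • x) - fderiv ℝ G (p + t • x) (t • h)) x +
            (G (p + t • (x + h)) - G (p + t • x)) h)) (Set.Icc 0 1) t := by
      intro t ht
      have h1 := ((ha _ hxh).2 t ht).sub ((ha x hx).2 t ht)
      have h2 := ((ha x hx).2 t ht).mul (hGt x hx h t ht).hasDerivWithinAt
      refine (h1.sub ((hasDerivWithinAt_id t (Set.Icc 0 1)).smul h2)).congr_deriv ?_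
      have hfl := hflat _ (hsub (hmem x hx t ht)) x h
      have hfl' : fderiv ℝ G (p + t • x) x h = G (p + t • x) h * G (p + t • x) x +
          fderiv ℝ G (p + t • x) h x - G (p + t • x) x * G (p + t • x) h := by
        rw [← hfl]; abel
      simp only [hfl', sub_apply, map_add, map_smul,
        smul_apply, id, one_smul, mul_add, mul_sub, sub_mul,
        smul_add, smul_sub, mul_smul_comm, smul_mul_assoc, mul_assoc]
      abel
    have hfin := norm_le_of_hasDerivWithinAt_unitInterval
      (ε := 42 * N * N * (M * M + M) * ‖h‖ ^ 2) (by positivity) hder (fun t ht => ?_) 1 (by simp)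
    · simpa [(ha x hx).1, (ha _ hxh).1] using hfin
    · have hk : ‖p + t • (x + h) - (p + t • x)‖ ≤ ‖h‖ := by
        rw [hsplit, add_sub_cancel_left]; exact hth t ht
      have b1 : ‖(a (x + h) t - a x t - t • (a x t * G (p + t • x) h)) * G (p + t • x) x‖ ≤
          ‖a (x + h) t - a x t - t • (a x t * G (p + t • x) h)‖ :=
        (norm_mul_le _ _).trans (mul_le_of_le_one_right (norm_nonneg _) (hg1 x hx t ht))
      have b2 : ‖(a (x + h) t - a x t) *
          (G (p + t • (x + h)) (x + h) - G (p + t • x) x)‖ ≤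
          3 * (6 * N * M * ‖h‖) * (2 * M * ‖h‖) :=
        (norm_mul_le _ _).trans (mul_le_mul (hd t ht) (hΔg t ht) (norm_nonneg _) (by positivity))
      have b3 : ‖(G (p + t • (x + h)) - G (p + t • x) - fderiv ℝ G (p + t • x) (t • h)) x‖ ≤
          M * ‖h‖ * ‖h‖ := by
        have := hT _ (hmem x hx t ht) _ (hmem _ hxh t ht)
        have e : p + t • (x + h) - (p + t • x) = t • h := by rw [hsplit, add_sub_cancel_left]
        rw [e] at this
        have h2 : M * ‖t • h‖ * ‖t • h‖ ≤ M * ‖h‖ * ‖h‖ := by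
          have := hth t ht
          gcongr
        refine (ContinuousLinearMap.le_of_opNorm_le _ (this.trans h2) x).trans ?_
        exact mul_le_of_le_one_right (by positivity) (by linarith)
      have b4 : ‖(G (p + t • (x + h)) - G (p + t • x)) h‖ ≤ M * ‖h‖ * ‖h‖ :=
        ContinuousLinearMap.le_of_opNorm_le _ (hΔG t ht) h
      have b5 : ‖a x t * ((G (p + t • (x + h)) - G (p + t • x) -
            fderiv ℝ G (p + t • x) (t • h)) x + (G (p + t • (x + h)) - G (p + t • x)) h)‖ ≤
          (3 * N) * (M * ‖h‖ * ‖h‖ + M * ‖h‖ * ‖h‖) :=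
        (norm_mul_le _ _).trans (mul_le_mul (hab x hx t ht)
          ((norm_add_le _ _).trans (add_le_add b3 b4)) (norm_nonneg _) (by positivity))
      refine (norm_add₃_le).trans ?_
      have c1 : 3 * (6 * N * M * ‖h‖) * (2 * M * ‖h‖) + (3 * N) * (M * ‖h‖ * ‖h‖ + M * ‖h‖ * ‖h‖) ≤
          42 * N * N * (M * M + M) * ‖h‖ ^ 2 := by
        have e1 : 0 ≤ M * ‖h‖ ^ 2 := by positivity
        have e2 : 0 ≤ M * M * ‖h‖ ^ 2 := by positivity
        have e3 : N ≤ N * N := by nlinarith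
        nlinarith [mul_le_mul_of_nonneg_right e3 e1, mul_le_mul_of_nonneg_right e3 e2,
          mul_nonneg (by linarith : 0 ≤ N) e1, mul_nonneg (by linarith : 0 ≤ N) e2]
      linarith
  refine ⟨r, hr, (Metric.ball_subset_ball hrr).trans hsub, fun y => a (y - p) 1, ?_, ?_⟩
  · have h0 : ‖(0 : E)‖ < r := by simpa using hr
    have := norm_le_of_hasDerivWithinAt_unitInterval (f := fun t => a 0 t - 1) le_rfl
      (fun t ht => ((ha 0 h0).2 t ht).sub_const 1) (fun t ht => by simp) 1 (by simp)
    simpa [(ha 0 h0).1, sub_eq_zero] using this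
  · intro y hy
    have hx : ‖y - p‖ < r := by simpa [dist_eq_norm] using hy
    have hO : (fun z => a (z - p) 1 - a (y - p) 1 - a (y - p) 1 * G y (z - y)) =O[nhds y]
        fun z => ‖z - y‖ ^ 2 := by
      refine Asymptotics.IsBigO.of_bound (3 * (42 * N * N * (M * M + M))) ?_
      filter_upwards [Metric.isOpen_ball.mem_nhds hy] with z hz
      have hz' : ‖(y - p) + (z - y)‖ < r := by
        rw [sub_add_sub_cancel']; simpa [dist_eq_norm] using hz
      have := hquad (y - p) (z - y) hx hz'
      rw [sub_add_sub_cancel', add_sub_cancel] at this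
      simpa [mul_assoc] using this
    have h0 := hO.hasFDerivAt (𝕜 := ℝ) (by norm_num)
    have h1 : HasFDerivAt (fun z => a (y - p) 1 + a (y - p) 1 * G y (z - y))
        ((ContinuousLinearMap.mul ℝ 𝔸 (a (y - p) 1)).comp (G y)) y := by
      simpa [mul_sub] using ((((ContinuousLinearMap.mul ℝ 𝔸 (a (y - p) 1)).comp (G y)).hasFDerivAt
        (x := y)).sub_const (a (y - p) 1 * G y y)).const_add (a (y - p) 1)
    have h3 := h0.add h1
    rw [zero_add] at h3
    refine h3.congr_of_eventuallyEq (Filter.Eventually.of_forall fun z => ?_)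
    simp

/-- A curve with velocity prescribed by a vector field that is continuous along it is `C¹`. -/
theorem contDiffOn_one_of_hasDerivAt {E : Type*} [NormedAddCommGroup E] [NormedSpace ℝ E]
    {α α' : ℝ → E} {I : Set ℝ} (hI : IsOpen I) (h : ∀ t ∈ I, HasDerivAt α (α' t) t)
    (hc : ContinuousOn α' I) : ContDiffOn ℝ 1 α I := by
  rw [show (1 : WithTop ℕ∞) = 0 + 1 by norm_num, contDiffOn_succ_iff_deriv_of_isOpen hI]
  refine ⟨fun t ht => (h t ht).differentiableAt.differentiableWithinAt, by simp, ?_⟩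
  rw [contDiffOn_zero]
  exact hc.congr fun t ht => (h t ht).deriv

theorem ContinuousLinearMap.eq_zero_of_ker_le_of_apply_eq_zero {E : Type*}
    [NormedAddCommGroup E] [NormedSpace ℝ E] {θ c : E →L[ℝ] ℝ} {w : E} (hw : θ w ≠ 0)
    (hker : ∀ v, θ v = 0 → c v = 0) (hcw : c w = 0) : c = 0 := by
  ext u
  have h := hker (u - (θ u / θ w) • w) (by simp [hw])
  simpa [hcw] using h

/-- If the integral paths of `ker θ` starting at `y₀` lie in a hyperplane, then a line tangent to
`ker θ` at `y₀` stays tangent to `ker θ` near `y₀`. -/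
theorem eventually_apply_line_eq_zero {E : Type*} [NormedAddCommGroup E] [NormedSpace ℝ E]
    [CompleteSpace E] {W : Set E} (hW : IsOpen W) {θ : E → E →L[ℝ] ℝ} (hθ : ContDiffOn ℝ 1 θ W)
    {y₀ : E} (hy₀ : y₀ ∈ W) (hθ₀ : θ y₀ ≠ 0) {c : E →L[ℝ] ℝ} (hc : c ≠ 0)
    (hleaf : ∀ β β' : ℝ → E, Continuous β' → (∀ t, HasDerivAt β (β' t) t) → β 0 = y₀ →
      (∀ t, β t ∈ W) → (∀ t, θ (β t) (β' t) = 0) → c (β 1) = c y₀)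
    {b : E} (hb : θ y₀ b = 0) :
    ∀ᶠ t : ℝ in nhds 0, θ (y₀ + t • b) b = 0 := by
  obtain ⟨w, hw⟩ : ∃ w, θ y₀ w ≠ 0 := by
    by_contra! h
    exact hθ₀ (ContinuousLinearMap.ext h)
  have hθat : ContDiffAt ℝ 1 θ y₀ := hθ.contDiffAt (hW.mem_nhds hy₀)
  have key : ∀ v, θ y₀ v = 0 → ∃ α : ℝ → E, ∃ ε > 0, α 0 = y₀ ∧ ∀ t ∈ Set.Ioo (-ε) ε,
      θ (α t) w ≠ 0 ∧ HasDerivAt α (v - (θ (α t) v / θ (α t) w) • w) t ∧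
        c (v - (θ (α t) v / θ (α t) w) • w) = 0 := by
    intro v hv
    have hX : ContDiffAt ℝ 1 (fun y => v - (θ y v / θ y w) • w) y₀ :=
      contDiffAt_const.sub (((hθat.clm_apply contDiffAt_const).div
        (hθat.clm_apply contDiffAt_const) hw).smul contDiffAt_const)
    obtain ⟨α, hα0, ε, hε, hα⟩ :=
      hX.exists_forall_mem_closedBall_exists_eq_forall_mem_Ioo_hasDerivAt₀ 0
    have hαc : ContinuousAt α 0 := (hα 0 (by simpa using hε)).continuousAt
    have hev : ∀ᶠ y in nhds y₀, y ∈ W ∧ θ y w ≠ 0 :=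
      Filter.Eventually.and (hW.mem_nhds hy₀)
        ((hθat.clm_apply contDiffAt_const).continuousAt.eventually_ne hw)
    rw [← hα0] at hev
    obtain ⟨δ, hδ, hball⟩ := Metric.eventually_nhds_iff.1 (hαc.eventually hev)
    have hsmall : ∀ t ∈ Set.Ioo (-min ε δ) (min ε δ), (α t ∈ W ∧ θ (α t) w ≠ 0) ∧
        HasDerivAt α (v - (θ (α t) v / θ (α t) w) • w) t := by
      intro t ht
      have h1 := min_le_left ε δ
      have h2 := min_le_right ε δ
      refine ⟨hball ?_, hα t ⟨by linarith [ht.1], by linarith [ht.2]⟩⟩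
      rw [Real.dist_eq, sub_zero, abs_lt]
      exact ⟨by linarith [ht.1], by linarith [ht.2]⟩
    have hmin : 0 < min ε δ := lt_min hε hδ
    have hs1 : 0 < Real.sin 1 := Real.sin_pos_of_pos_of_lt_pi one_pos
      (by linarith [Real.pi_gt_three])
    have hconst : ∀ τ ∈ Set.Ioo (-(min ε δ * Real.sin 1)) (min ε δ * Real.sin 1),
        c (α τ) = c y₀ := by
      intro τ hτ
      set κ := τ / Real.sin 1 with hκ
      have hκτ : κ * Real.sin 1 = τ := by rw [hκ]; field_simp
      have hκb : |κ| < min ε δ := by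
        rw [abs_lt]
        constructor <;> nlinarith [hτ.1, hτ.2]
      have hin : ∀ t, κ * Real.sin t ∈ Set.Ioo (-min ε δ) (min ε δ) := by
        intro t
        rw [Set.mem_Ioo, ← abs_lt, abs_mul]
        exact (mul_le_of_le_one_right (abs_nonneg _) (Real.abs_sin_le_one t)).trans_lt hκb
      have hd : ∀ t, HasDerivAt (fun t => κ * Real.sin t) (κ * Real.cos t) t :=
        fun t => (Real.hasDerivAt_sin t).const_mul κ
      have hβ : ∀ t, HasDerivAt (fun t => α (κ * Real.sin t)) ((κ * Real.cos t) •
          (v - (θ (α (κ * Real.sin t)) v / θ (α (κ * Real.sin t)) w) • w)) t :=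
        fun t => (hsmall _ (hin t)).2.scomp t (hd t)
      have hβc : Continuous fun t => α (κ * Real.sin t) :=
        continuous_iff_continuousAt.2 fun t => (hβ t).continuousAt
      have hθβ : Continuous fun t => θ (α (κ * Real.sin t)) :=
        hθ.continuousOn.comp_continuous hβc fun t => (hsmall _ (hin t)).1.1
      have := hleaf _ _ ?_ hβ (by simp [hα0]) (fun t => (hsmall _ (hin t)).1.1) (fun t => ?_)
      · simpa [hκτ] using this
      · have := (hθβ.clm_apply (continuous_const (y := v))).div
          (hθβ.clm_apply (continuous_const (y := w))) fun t => (hsmall _ (hin t)).1.2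
        exact (continuous_const.mul Real.continuous_cos).smul
          (continuous_const.sub (this.smul continuous_const))
      · have := (hsmall _ (hin t)).1.2
        simp [this]
    have hle : min ε δ * Real.sin 1 ≤ min ε δ :=
      mul_le_of_le_one_right hmin.le (Real.sin_le_one 1)
    refine ⟨α, min ε δ * Real.sin 1, by positivity, hα0, fun t ht => ?_⟩
    have ht' : t ∈ Set.Ioo (-min ε δ) (min ε δ) := ⟨by linarith [ht.1], by linarith [ht.2]⟩
    refine ⟨(hsmall t ht').1.2, (hsmall t ht').2, ?_⟩
    have hd1 : HasDerivAt (fun t => c (α t)) (c (v - (θ (α t) v / θ (α t) w) • w)) t :=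
      c.hasFDerivAt.comp_hasDerivAt t (hsmall t ht').2
    have hd2 : HasDerivAt (fun t => c (α t)) 0 t :=
      (hasDerivAt_const t (c y₀)).congr_of_eventuallyEq
        (Filter.eventually_of_mem (isOpen_Ioo.mem_nhds ht) hconst)
    exact hd1.unique hd2
  have hker : ∀ v, θ y₀ v = 0 → c v = 0 := by
    intro v hv
    obtain ⟨α, ε, hε, hα0, h⟩ := key v hv
    simpa [hα0, hv] using (h 0 (by simpa using hε)).2.2
  have hcw : c w ≠ 0 := fun h =>
    hc (ContinuousLinearMap.eq_zero_of_ker_le_of_apply_eq_zero hw hker h)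
  obtain ⟨α, ε, hε, hα0, h⟩ := key b hb
  have hz : ∀ t ∈ Set.Ioo (-ε) ε, θ (α t) b = 0 := by
    intro t ht
    obtain ⟨h1, -, h3⟩ := h t ht
    rw [map_sub, hker b hb, map_smul, zero_sub, neg_eq_zero, smul_eq_mul] at h3
    simpa [hcw, h1] using h3
  have hline : Set.EqOn α (fun t => y₀ + t • b) (Set.Ioo (-ε) ε) := by
    refine isOpen_Ioo.eqOn_of_deriv_eq (𝕜 := ℝ) isPreconnected_Ioo ?_ ?_ ?_
      (x := 0) (by simpa using hε) (by simp [hα0])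
    · exact fun t ht => (h t ht).2.1.differentiableAt.differentiableWithinAt
    · fun_prop
    · intro t ht
      have h1 : HasDerivAt (fun t : ℝ => y₀ + t • b) b t := by
        simpa using ((hasDerivAt_id t).smul_const b).const_add y₀
      rw [(h t ht).2.1.deriv, h1.deriv, hz t ht]
      simp
  filter_upwards [isOpen_Ioo.mem_nhds (show (0 : ℝ) ∈ Set.Ioo (-ε) ε by simpa using hε)] with t ht
  have := hz t ht
  rwa [hline ht] at this

theorem contDiffOn_infty_of_hasFDerivAt_mul {E 𝔸 : Type*} [NormedAddCommGroup E]
    [NormedSpace ℝ E] [NormedRing 𝔸] [NormedAlgebra ℝ 𝔸] {G : E → E →L[ℝ] 𝔸} {A : E → 𝔸}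
    {s : Set E} (hs : IsOpen s) (hG : ContDiffOn ℝ (⊤ : ℕ∞) G s)
    (hA : ∀ x ∈ s, HasFDerivAt A ((ContinuousLinearMap.mul ℝ 𝔸 (A x)).comp (G x)) x) :
    ContDiffOn ℝ (⊤ : ℕ∞) A s := by
  rw [contDiffOn_infty]
  intro m
  induction m with
  | zero =>
    exact contDiffOn_zero.2 fun x hx => (hA x hx).continuousAt.continuousWithinAt
  | succ m ih =>
    push_cast
    rw [contDiffOn_succ_iff_fderiv_of_isOpen hs]
    refine ⟨fun x hx => (hA x hx).differentiableAt.differentiableWithinAt, by simp, ?_⟩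
    have h1 : ContDiffOn ℝ m (fun x => (ContinuousLinearMap.mul ℝ 𝔸 (A x)).comp (G x)) s :=
      ((ContinuousLinearMap.mul ℝ 𝔸).contDiff.comp_contDiffOn ih).clm_comp
        (hG.of_le (by exact_mod_cast le_top))
    exact h1.congr fun x hx => (hA x hx).fderiv

/-- A flat torsion-free connection `G` has local affine coordinates `φ`: their Jacobian `A` is
parallel, that is `dA = A · G`. -/
theorem exists_affine_chart_of_flat {E : Type*} [NormedAddCommGroup E] [NormedSpace ℝ E]
    [CompleteSpace E] {G : E → E →L[ℝ] E →L[ℝ] E} {s : Set E}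
    (hs : IsOpen s) {p : E} (hp : p ∈ s) (hG : ContDiffOn ℝ (⊤ : ℕ∞) G s)
    (hsymm : ∀ x ∈ s, ∀ u v, G x u v = G x v u)
    (hflat : ∀ x ∈ s, ∀ u v, G x u * G x v + fderiv ℝ G x u v = G x v * G x u + fderiv ℝ G x v u) :
    ∃ e : OpenPartialHomeomorph E E, p ∈ e.source ∧ e.source ⊆ s ∧
      ContDiffOn ℝ (⊤ : ℕ∞) e e.source ∧ ContDiffOn ℝ (⊤ : ℕ∞) e.symm e.target ∧
      ∃ A B : E → E →L[ℝ] E, ∀ x ∈ e.source, A x * B x = 1 ∧ B x * A x = 1 ∧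
        HasFDerivAt e (A x) x ∧
        HasFDerivAt B (-((ContinuousLinearMap.mul ℝ (E →L[ℝ] E)).flip (B x)).comp (G x)) x := by
  obtain ⟨r, hr, hrs, A, hAp, hA⟩ := exists_hasFDerivAt_mul_of_flat hs hp
    (hG.of_le (WithTop.coe_le_coe.2 le_top)) hflat
  have hAs := contDiffOn_infty_of_hasFDerivAt_mul Metric.isOpen_ball (hG.mono hrs) hA
  obtain ⟨φ, hφ⟩ := (convex_ball p r).exists_forall_hasFDerivAt_of_fderiv_symmetric
    Metric.isOpen_ball (fun x hx => (hA x hx).differentiableAt.differentiableWithinAt)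
    (fun x hx u v => by rw [(hA x hx).fderiv]; simp [hsymm x (hrs hx) u v])
  have hφs : ContDiffOn ℝ (⊤ : ℕ∞) φ (Metric.ball p r) := by
    rw [contDiffOn_infty_iff_fderiv_of_isOpen Metric.isOpen_ball]
    exact ⟨fun x hx => (hφ x hx).differentiableAt.differentiableWithinAt,
      hAs.congr fun x hx => (hφ x hx).fderiv⟩
  have hpb : p ∈ Metric.ball p r := Metric.mem_ball_self hr
  have hunit : IsOpen (Metric.ball p r ∩ A ⁻¹' {a | IsUnit a}) :=
    hAs.continuousOn.isOpen_inter_preimage Metric.isOpen_ball Units.isOpen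
  have hφp : HasFDerivAt φ ((ContinuousLinearEquiv.refl ℝ E : E ≃L[ℝ] E) : E →L[ℝ] E) p := by
    have := hφ p hpb
    rwa [hAp] at this
  let e₀ := (hφs.contDiffAt (Metric.isOpen_ball.mem_nhds hpb)).toOpenPartialHomeomorph φ hφp
    (by simp)
  have he₀ : p ∈ e₀.source := ContDiffAt.mem_toOpenPartialHomeomorph_source _ _ _
  let e := e₀.restr (Metric.ball p r ∩ A ⁻¹' {a | IsUnit a})
  have hes : e.source = e₀.source ∩ (Metric.ball p r ∩ A ⁻¹' {a | IsUnit a}) :=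
    e₀.restr_source' _ hunit
  have heφ : ∀ x, e x = φ x := fun x => rfl
  have hsb : e.source ⊆ Metric.ball p r := fun x hx => (hes ▸ hx).2.1
  have hsu : ∀ x ∈ e.source, IsUnit (A x) := fun x hx => (hes ▸ hx).2.2
  refine ⟨e, ?_, hsb.trans hrs, hφs.mono hsb, fun y hy => ?_, A, fun x => Ring.inverse (A x), ?_⟩
  · rw [hes]
    exact ⟨he₀, hpb, by simp [hAp]⟩
  · have hx := e.map_target hy
    obtain ⟨u, hu⟩ := hsu _ hx
    refine (e.contDiffAt_symm (f₀' := ContinuousLinearEquiv.unitsEquiv ℝ E u) hy ?_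
      (hφs.contDiffAt (Metric.isOpen_ball.mem_nhds (hsb hx)))).contDiffWithinAt
    have := hφ _ (hsb hx)
    rw [← hu] at this
    exact this
  · intro x hx
    refine ⟨Ring.mul_inverse_cancel _ (hsu x hx), Ring.inverse_mul_cancel _ (hsu x hx),
      hφ x (hsb hx), ?_⟩
    obtain ⟨u, hu⟩ := hsu x hx
    have h1 := hasFDerivAt_ringInverse (𝕜 := ℝ) u
    rw [hu] at h1
    refine (h1.comp x (hA x (hsb hx))).congr_fderiv ?_
    ext v w
    simp [← hu]

/-- If `ker θ` is totally geodesic for the flat connection with parallel coframe `B⁻¹`, then every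
path tangent to `ker θ` stays in a hyperplane in the corresponding affine coordinates. -/
theorem apply_eq_of_tangent_path {E : Type*} [NormedAddCommGroup E] [NormedSpace ℝ E]
    {G : E → E →L[ℝ] E →L[ℝ] E} {V : Set E} (hV : IsOpen V) {φ : E → E} {A B : E → E →L[ℝ] E}
    (hGc : ContinuousOn G V)
    (hAB : ∀ x ∈ V, A x * B x = 1 ∧ B x * A x = 1 ∧ HasFDerivAt φ (A x) x ∧
      HasFDerivAt B (-((ContinuousLinearMap.mul ℝ (E →L[ℝ] E)).flip (B x)).comp (G x)) x)
    {θ : E → E →L[ℝ] ℝ} (hθ : ContDiffOn ℝ 1 θ V) {w : E → E} (hw : ContinuousOn w V)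
    (hθw : ∀ x ∈ V, θ x (w x) ≠ 0)
    (hgeo : ∀ x ∈ V, ∀ u v, θ x u = 0 → θ x v = 0 → fderiv ℝ θ x u v = θ x (G x u v))
    {γ γ' : ℝ → E} (hγ : ∀ t ∈ Set.Icc (0 : ℝ) 1, HasDerivAt γ (γ' t) t)
    (hγ' : ContinuousOn γ' (Set.Icc 0 1)) (hγV : ∀ t ∈ Set.Icc (0 : ℝ) 1, γ t ∈ V)
    (htan : ∀ t ∈ Set.Icc (0 : ℝ) 1, θ (γ t) (γ' t) = 0) :
    θ (γ 0) (B (γ 0) (φ (γ 1))) = θ (γ 0) (B (γ 0) (φ (γ 0))) := by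
  have hγc : ContinuousOn γ (Set.Icc 0 1) := fun t ht => (hγ t ht).continuousAt.continuousWithinAt
  have hθc : ContinuousOn (fun t => θ (γ t)) (Set.Icc 0 1) := hθ.continuousOn.comp hγc hγV
  have hwc : ContinuousOn (fun t => w (γ t)) (Set.Icc 0 1) := hw.comp hγc hγV
  have hDc : ContinuousOn (fun t => fderiv ℝ θ (γ t)) (Set.Icc 0 1) :=
    (hθ.continuousOn_fderiv_of_isOpen hV le_rfl).comp hγc hγV
  set lam : ℝ → ℝ := fun t => (fderiv ℝ θ (γ t) (γ' t) (w (γ t)) -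
    θ (γ t) (G (γ t) (γ' t) (w (γ t)))) / θ (γ t) (w (γ t)) with hlam
  have hlamc : ContinuousOn lam (Set.Icc 0 1) := by
    refine ContinuousOn.div ?_ (hθc.clm_apply hwc) fun t ht => hθw _ (hγV t ht)
    exact ((hDc.clm_apply hγ').clm_apply hwc).sub
      (hθc.clm_apply (((hGc.comp hγc hγV).clm_apply hγ').clm_apply hwc))
  obtain ⟨K, hK⟩ := isCompact_Icc.exists_bound_of_continuousOn hlamc
  have hlam_eq : ∀ t ∈ Set.Icc (0 : ℝ) 1, ∀ v, fderiv ℝ θ (γ t) (γ' t) v -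
      θ (γ t) (G (γ t) (γ' t) v) = lam t * θ (γ t) v := by
    intro t ht v
    have hne := hθw _ (hγV t ht)
    have h := hgeo _ (hγV t ht) (γ' t) (v - (θ (γ t) v / θ (γ t) (w (γ t))) • w (γ t)) (htan t ht)
      (by simp [hne])
    simp only [map_sub, map_smul, smul_eq_mul] at h
    simp only [hlam]
    field_simp at h ⊢
    linarith
  have hpar : ∀ v, ∀ t ∈ Set.Icc (0 : ℝ) 1, HasDerivAt (fun t => θ (γ t) (B (γ t) v))
      (lam t * θ (γ t) (B (γ t) v)) t := by
    intro v t ht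
    have h1 : HasDerivAt (fun t => θ (γ t)) (fderiv ℝ θ (γ t) (γ' t)) t :=
      ((hθ.differentiableOn one_ne_zero).differentiableAt
        (hV.mem_nhds (hγV t ht))).hasFDerivAt.comp_hasDerivAt t (hγ t ht)
    have h2 := (hAB _ (hγV t ht)).2.2.2.comp_hasDerivAt t (hγ t ht)
    have h3 := h1.clm_apply (h2.clm_apply (hasDerivAt_const t v))
    refine h3.congr_deriv ?_
    rw [← hlam_eq t ht]
    simp [sub_eq_add_neg]
  have hker : ∀ v, θ (γ 0) (B (γ 0) v) = 0 → ∀ t ∈ Set.Icc (0 : ℝ) 1,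
      θ (γ t) (B (γ t) v) = 0 := by
    intro v hv
    refine eq_zero_of_abs_deriv_le_mul_abs_self_of_eq_zero_right
      (fun t ht => (hpar v t ht).continuousAt.continuousWithinAt)
      (fun t ht => (hpar v t ⟨ht.1, ht.2.le⟩).hasDerivWithinAt) hv (K := K) fun t ht => ?_
    rw [norm_mul]
    exact mul_le_mul_of_nonneg_right (hK t ⟨ht.1, ht.2.le⟩) (norm_nonneg _)
  have hker' : ∀ t ∈ Set.Icc (0 : ℝ) 1, θ (γ 0) (B (γ 0) (A (γ t) (γ' t))) = 0 := by
    intro t ht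
    by_contra hne
    have hBA : B (γ t) (A (γ t) (γ' t)) = γ' t := by
      simpa using DFunLike.congr_fun (hAB _ (hγV t ht)).2.1 (γ' t)
    have hz := ContinuousLinearMap.eq_zero_of_ker_le_of_apply_eq_zero
      (θ := (θ (γ 0)).comp (B (γ 0))) (c := (θ (γ t)).comp (B (γ t))) hne
      (fun v hv => hker v hv t ht) (by simpa [hBA] using htan t ht)
    refine hθw _ (hγV t ht) ?_
    have hBA' : B (γ t) (A (γ t) (w (γ t))) = w (γ t) := by
      simpa using DFunLike.congr_fun (hAB _ (hγV t ht)).2.1 (w (γ t))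
    simpa [hBA'] using DFunLike.congr_fun hz (A (γ t) (w (γ t)))
  have hd : ∀ t ∈ Set.Icc (0 : ℝ) 1,
      HasDerivAt (fun t => θ (γ 0) (B (γ 0) (φ (γ t)))) 0 t := by
    intro t ht
    have h1 := (hAB _ (hγV t ht)).2.2.1.comp_hasDerivAt t (hγ t ht)
    have h2 := ((θ (γ 0)).comp (B (γ 0))).hasFDerivAt.comp_hasDerivAt t h1
    refine h2.congr_deriv ?_
    simpa using hker' t ht
  exact constant_of_has_deriv_right_zero (fun t ht => (hd t ht).continuousAt.continuousWithinAt)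
    (fun t ht => (hd t ⟨ht.1, ht.2.le⟩).hasDerivWithinAt) 1 (by simp)

/-- The covector with components `a`. -/
noncomputable def covector (n : ℕ) : (Fin n → ℝ) →L[ℝ] (Fin n → ℝ) →L[ℝ] ℝ :=
  ∑ k, (ContinuousLinearMap.proj (R := ℝ) (φ := fun _ : Fin n => ℝ) k).smulRight
    (ContinuousLinearMap.proj (R := ℝ) (φ := fun _ : Fin n => ℝ) k)

theorem covector_apply {n : ℕ} (a v : Fin n → ℝ) : covector n a v = ∑ k, a k * v k := by
  simp [covector]

theorem covector_single {n : ℕ} (a : Fin n → ℝ) (k : Fin n) :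
    covector n a (Pi.single k 1) = a k := by
  simp [covector_apply, Pi.single_apply]

theorem covector_self_ne_zero {n : ℕ} {a : Fin n → ℝ} (ha : a ≠ 0) : covector n a a ≠ 0 := by
  rw [covector_apply]
  intro h
  rw [Finset.sum_eq_zero_iff_of_nonneg fun k _ => mul_self_nonneg _] at h
  exact ha (funext fun k => mul_self_eq_zero.1 (h k (Finset.mem_univ k)))

theorem IsLinearMap.eq_zero_of_single {n : ℕ} {f : (Fin n → ℝ) → ℝ} (hf : IsLinearMap ℝ f)
    (h : ∀ i, f (Pi.single i 1) = 0) (u : Fin n → ℝ) : f u = 0 := by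
  have := LinearMap.pi_apply_eq_sum_univ (hf.mk' f) u
  rw [IsLinearMap.mk'_apply] at this
  rw [this]
  refine Finset.sum_eq_zero fun i _ => ?_
  have hi : (fun j => if i = j then (1 : ℝ) else 0) = Pi.single i 1 := by
    ext j; simp [Pi.single_apply, eq_comm]
  rw [IsLinearMap.mk'_apply, hi, h, smul_zero]

theorem fderiv_covector_comp {n : ℕ} {ω : (Fin n → ℝ) → Fin n → ℝ} {x : Fin n → ℝ}
    (hω : DifferentiableAt ℝ ω x) :
    fderiv ℝ (fun y => covector n (ω y)) x = (covector n).comp (fderiv ℝ ω x) :=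
  ((covector n).hasFDerivAt.comp x hω.hasFDerivAt).fderiv

/-- If `ω ∧ dω = 0`, then `dω` vanishes on `ker ω`. -/
theorem IsFoliationForm.fderiv_apply_comm {n : ℕ} {U : Set (Fin n → ℝ)}
    {ω : (Fin n → ℝ) → Fin n → ℝ} (h : IsFoliationForm U ω) (hU : IsOpen U) {x : Fin n → ℝ}
    (hx : x ∈ U) {u v : Fin n → ℝ} (hu : covector n (ω x) u = 0) (hv : covector n (ω x) v = 0) :
    covector n (fderiv ℝ ω x u) v = covector n (fderiv ℝ ω x v) u := by
  have hd : DifferentiableAt ℝ ω x :=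
    (h.1.differentiableOn (by simp)).differentiableAt (hU.mem_nhds hx)
  have hpd : ∀ i k, pd i (fun y => ω y k) x = fderiv ℝ ω x (Pi.single i 1) k := fun i k => by
    rw [pd, (hasFDerivAt_pi'.1 hd.hasFDerivAt k).fderiv]; rfl
  set L : (Fin n → ℝ) → (Fin n → ℝ) → ℝ := fun u v =>
    covector n (fderiv ℝ ω x u) v - covector n (fderiv ℝ ω x v) u with hL
  have hlin : ∀ u v w, covector n (ω x) u * L v w + covector n (ω x) v * L w u +
      covector n (ω x) w * L u v = 0 := by
    intro u v w
    refine IsLinearMap.eq_zero_of_single (f := fun u => covector n (ω x) u * L v w +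
      covector n (ω x) v * L w u + covector n (ω x) w * L u v) ⟨fun a b => ?_, fun c a => ?_⟩
      (fun i => ?_) u
    · simp [hL]; ring
    · simp [hL]; ring
    refine IsLinearMap.eq_zero_of_single (f := fun v => covector n (ω x) (Pi.single i 1) * L v w +
      covector n (ω x) v * L w (Pi.single i 1) + covector n (ω x) w * L (Pi.single i 1) v)
      ⟨fun a b => ?_, fun c a => ?_⟩ (fun j => ?_) v
    · simp [hL]; ring
    · simp [hL]; ring
    refine IsLinearMap.eq_zero_of_single (f := fun w =>
      covector n (ω x) (Pi.single i 1) * L (Pi.single j 1) w +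
      covector n (ω x) (Pi.single j 1) * L w (Pi.single i 1) +
      covector n (ω x) w * L (Pi.single i 1) (Pi.single j 1))
      ⟨fun a b => ?_, fun c a => ?_⟩ (fun k => ?_) w
    · simp [hL]; ring
    · simp [hL]; ring
    have := h.2.2 x hx i j k
    simpa only [hL, covector_single, hpd] using this
  have := hlin (ω x) u v
  rw [hu, hv] at this
  simpa [covector_self_ne_zero (h.2.1 x hx), hL, sub_eq_zero] using this

/-- The Christoffel symbols of the bilinear-map valued function `G`. -/
noncomputable def christoffel {n : ℕ}
    (G : (Fin n → ℝ) → (Fin n → ℝ) →L[ℝ] (Fin n → ℝ) →L[ℝ] (Fin n → ℝ))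
    (k i j : Fin n) (x : Fin n → ℝ) : ℝ :=
  G x (Pi.single i 1) (Pi.single j 1) k

theorem sum_apply_single {n : ℕ} (L : (Fin n → ℝ) →L[ℝ] (Fin n → ℝ)) (v : Fin n → ℝ) (k : Fin n) :
    ∑ j, L (Pi.single j 1) k * v j = L v k := by
  conv_rhs => rw [pi_eq_sum_univ' v, map_sum]
  simp only [Finset.sum_apply, map_smul, Pi.smul_apply, smul_eq_mul]
  exact Finset.sum_congr rfl fun j _ => mul_comm _ _

theorem sum_sum_christoffel {n : ℕ}
    (G : (Fin n → ℝ) → (Fin n → ℝ) →L[ℝ] (Fin n → ℝ) →L[ℝ] (Fin n → ℝ))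
    (x u v : Fin n → ℝ) (k : Fin n) :
    ∑ i, ∑ j, christoffel G k i j x * u i * v j = G x u v k := by
  have h := sum_apply_single ((G x).flip v) u k
  simp only [ContinuousLinearMap.flip_apply] at h
  rw [← h]
  refine Finset.sum_congr rfl fun i _ => ?_
  rw [← sum_apply_single, Finset.sum_mul]
  exact Finset.sum_congr rfl fun j _ => by rw [christoffel]; ring

theorem contDiffOn_smul_vector {E F : Type*} [NormedAddCommGroup E] [NormedSpace ℝ E]
    [NormedAddCommGroup F] [NormedSpace ℝ F] {m : WithTop ℕ∞} {f : E → ℝ} {s : Set E}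
    (hf : ContDiffOn ℝ m f s) (v : F) : ContDiffOn ℝ m (fun x => f x • v) s :=
  hf.smul contDiffOn_const

theorem exists_christoffel_eq {n : ℕ} {V : Set (Fin n → ℝ)}
    {Γ : Fin n → Fin n → Fin n → (Fin n → ℝ) → ℝ} (hΓ : IsTorsionFreeConn V Γ) :
    ∃ G : (Fin n → ℝ) → (Fin n → ℝ) →L[ℝ] (Fin n → ℝ) →L[ℝ] (Fin n → ℝ),
      ContDiffOn ℝ (⊤ : ℕ∞) G V ∧ christoffel G = Γ := by
  let T : Fin n → Fin n → Fin n → (Fin n → ℝ) →L[ℝ] (Fin n → ℝ) →L[ℝ] (Fin n → ℝ) := fun k i j =>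
    (ContinuousLinearMap.proj (R := ℝ) (φ := fun _ : Fin n => ℝ) i).smulRight
      ((ContinuousLinearMap.proj (R := ℝ) (φ := fun _ : Fin n => ℝ) j).smulRight
        (Pi.single k (1 : ℝ) : Fin n → ℝ))
  refine ⟨fun x => ∑ k, ∑ i, ∑ j, Γ k i j x • T k i j, ?_, ?_⟩
  · exact ContDiffOn.sum fun k _ => ContDiffOn.sum fun i _ => ContDiffOn.sum fun j _ =>
      contDiffOn_smul_vector (hΓ.1 k i j) _
  · funext k i j x
    simp [christoffel, T, Pi.single_apply]

theorem apply_comm_of_christoffel_comm {n : ℕ}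
    {G : (Fin n → ℝ) → (Fin n → ℝ) →L[ℝ] (Fin n → ℝ) →L[ℝ] (Fin n → ℝ)} {x : Fin n → ℝ}
    (h : ∀ k i j, christoffel G k i j x = christoffel G k j i x) (u v : Fin n → ℝ) :
    G x u v = G x v u := by
  ext k
  rw [← sum_sum_christoffel, ← sum_sum_christoffel, Finset.sum_comm]
  refine Finset.sum_congr rfl fun i _ => Finset.sum_congr rfl fun j _ => ?_
  rw [h]; ring

theorem pd_christoffel {n : ℕ}
    {G : (Fin n → ℝ) → (Fin n → ℝ) →L[ℝ] (Fin n → ℝ) →L[ℝ] (Fin n → ℝ)} {x : Fin n → ℝ}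
    (hG : DifferentiableAt ℝ G x) (i j k l : Fin n) :
    pd i (christoffel G k j l) x = fderiv ℝ G x (Pi.single i 1) (Pi.single j 1) (Pi.single l 1) k := by
  have h := hasFDerivAt_pi'.1 ((hG.hasFDerivAt.clm_apply
    (hasFDerivAt_const (Pi.single j (1 : ℝ)) x)).clm_apply
      (hasFDerivAt_const (Pi.single l (1 : ℝ)) x)) k
  rw [pd, show christoffel G k j l = fun y => G y (Pi.single j 1) (Pi.single l 1) k from rfl,
    h.fderiv]
  simp

theorem curv_christoffel {n : ℕ}
    {G : (Fin n → ℝ) → (Fin n → ℝ) →L[ℝ] (Fin n → ℝ) →L[ℝ] (Fin n → ℝ)} {x : Fin n → ℝ}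
    (hG : DifferentiableAt ℝ G x) (k l i j : Fin n) :
    curv (christoffel G) k l i j x =
      (G x (Pi.single i 1) * G x (Pi.single j 1) +
        fderiv ℝ G x (Pi.single i 1) (Pi.single j 1)) (Pi.single l 1) k -
      (G x (Pi.single j 1) * G x (Pi.single i 1) +
        fderiv ℝ G x (Pi.single j 1) (Pi.single i 1)) (Pi.single l 1) k := by
  have h : ∀ i j, ∑ m, christoffel G k i m x * christoffel G m j l x =
      G x (Pi.single i 1) (G x (Pi.single j 1) (Pi.single l 1)) k :=
    fun i j => sum_apply_single (G x (Pi.single i 1)) _ k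
  rw [curv, Finset.sum_sub_distrib, h, h, pd_christoffel hG, pd_christoffel hG]
  simp only [add_apply, mul_apply_eq_comp, Pi.add_apply]
  ring

theorem flat_of_curv_eq_zero {n : ℕ}
    {G : (Fin n → ℝ) → (Fin n → ℝ) →L[ℝ] (Fin n → ℝ) →L[ℝ] (Fin n → ℝ)} {x : Fin n → ℝ}
    (hG : DifferentiableAt ℝ G x) (h : ∀ k l i j, curv (christoffel G) k l i j x = 0)
    (u v : Fin n → ℝ) :
    G x u * G x v + fderiv ℝ G x u v = G x v * G x u + fderiv ℝ G x v u := by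
  ext w k
  rw [← sub_eq_zero]
  set K : (Fin n → ℝ) → (Fin n → ℝ) → (Fin n → ℝ) → ℝ := fun u v w =>
    (G x u * G x v + fderiv ℝ G x u v) w k - (G x v * G x u + fderiv ℝ G x v u) w k with hK
  refine IsLinearMap.eq_zero_of_single (f := fun u => K u v w) ⟨fun a b => ?_, fun c a => ?_⟩
    (fun i => ?_) u
  · simp [hK]; ring
  · simp [hK]; ring
  refine IsLinearMap.eq_zero_of_single (f := fun v => K (Pi.single i 1) v w)
    ⟨fun a b => ?_, fun c a => ?_⟩ (fun j => ?_) v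
  · simp [hK]; ring
  · simp [hK]; ring
  refine IsLinearMap.eq_zero_of_single (f := fun w => K (Pi.single i 1) (Pi.single j 1) w)
    ⟨fun a b => ?_, fun c a => ?_⟩ (fun l => ?_) w
  · simp [hK]; ring
  · simp [hK]; ring
  rw [← h k l i j, curv_christoffel hG]
theorem ContDiffOn.hasDerivAt_deriv_deriv {E : Type*} [NormedAddCommGroup E] [NormedSpace ℝ E]
    {γ : ℝ → E} {I : Set ℝ} (h : ContDiffOn ℝ 2 γ I) (hI : IsOpen I) {t : ℝ} (ht : t ∈ I) :
    HasDerivAt γ (deriv γ t) t ∧ HasDerivAt (deriv γ) (deriv (deriv γ) t) t := by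
  rw [show (2 : WithTop ℕ∞) = 1 + 1 by norm_num, contDiffOn_succ_iff_deriv_of_isOpen hI] at h
  exact ⟨(h.1.differentiableAt (hI.mem_nhds ht)).hasDerivAt,
    ((h.2.2.differentiableOn one_ne_zero).differentiableAt (hI.mem_nhds ht)).hasDerivAt⟩

theorem HasDerivAt.deriv_apply {n : ℕ} {γ : ℝ → Fin n → ℝ} {γ' : Fin n → ℝ} {t : ℝ}
    (h : HasDerivAt γ γ' t) (k : Fin n) : _root_.deriv (fun u => γ u k) t = γ' k :=
  (hasDerivAt_pi.1 h k).deriv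

theorem isGeodesicOn_christoffel_iff {n : ℕ} {V : Set (Fin n → ℝ)}
    {G : (Fin n → ℝ) → (Fin n → ℝ) →L[ℝ] (Fin n → ℝ) →L[ℝ] (Fin n → ℝ)} {I : Set ℝ}
    (hI : IsOpen I) {γ : ℝ → Fin n → ℝ} :
    IsGeodesicOn V (christoffel G) I γ ↔ (∀ t ∈ I, γ t ∈ V) ∧ ContDiffOn ℝ 2 γ I ∧
      ∀ t ∈ I, deriv (deriv γ) t + G (γ t) (deriv γ t) (deriv γ t) = 0 := by
  refine and_congr_right fun _ => and_congr_right fun hγ => forall₂_congr fun t ht => ?_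
  rw [funext_iff]
  refine forall_congr' fun k => ?_
  have h1 : ∀ s ∈ I, ∀ k, deriv (fun u => γ u k) s = deriv γ s k := fun s hs k =>
    (hγ.hasDerivAt_deriv_deriv hI hs).1.deriv_apply k
  have h2 : deriv (fun s => deriv (fun u => γ u k) s) t = deriv (deriv γ) t k := by
    rw [← (hγ.hasDerivAt_deriv_deriv hI ht).2.deriv_apply k]
    refine Filter.EventuallyEq.deriv_eq ?_
    filter_upwards [hI.mem_nhds ht] with s hs using h1 s hs k
  simp only [h2, h1 t ht, sum_sum_christoffel, Pi.add_apply, Pi.zero_apply]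

/-- Existence of geodesics with prescribed initial position and velocity. -/
theorem exists_isGeodesicOn {n : ℕ} {V : Set (Fin n → ℝ)} (hV : IsOpen V)
    {G : (Fin n → ℝ) → (Fin n → ℝ) →L[ℝ] (Fin n → ℝ) →L[ℝ] (Fin n → ℝ)}
    (hG : ContDiffOn ℝ (⊤ : ℕ∞) G V) {x : Fin n → ℝ} (hx : x ∈ V) (v : Fin n → ℝ) :
    ∃ γ : ℝ → Fin n → ℝ, ∃ ε > 0, γ 0 = x ∧ HasDerivAt γ v 0 ∧
      HasDerivAt (deriv γ) (-G x v v) 0 ∧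
      IsGeodesicOn V (christoffel G) (Set.Ioo (-ε) ε) γ := by
  have hGat : ContDiffAt ℝ 1 G x :=
    (hG.contDiffAt (hV.mem_nhds hx)).of_le (WithTop.coe_le_coe.2 le_top)
  have hX : ContDiffAt ℝ 1 (fun z : (Fin n → ℝ) × (Fin n → ℝ) => (z.2, -G z.1 z.2 z.2)) (x, v) := by
    have h : ContDiffAt ℝ 1 (fun z : (Fin n → ℝ) × (Fin n → ℝ) => G z.1) (x, v) :=
      ContDiffAt.comp (x, v) hGat contDiffAt_fst
    exact contDiffAt_snd.prodMk ((h.clm_apply contDiffAt_snd).clm_apply contDiffAt_snd).neg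
  obtain ⟨α, hα0, ε, hε, hα⟩ :=
    hX.exists_forall_mem_closedBall_exists_eq_forall_mem_Ioo_hasDerivAt₀ 0
  simp only [zero_sub, zero_add] at hα
  have hαc : ContinuousAt α 0 := (hα 0 (by simpa using hε)).continuousAt
  have hev : ∀ᶠ z in nhds (α 0), z.1 ∈ V := by
    rw [hα0]
    exact continuousAt_fst.eventually (hV.mem_nhds hx)
  obtain ⟨δ, hδ, hball⟩ := Metric.eventually_nhds_iff.1 (hαc.eventually hev)
  have hmin : 0 < min ε δ := lt_min hε hδ
  have h0 : (0 : ℝ) ∈ Set.Ioo (-min ε δ) (min ε δ) := by simpa using hmin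
  have hαV : ∀ t ∈ Set.Ioo (-min ε δ) (min ε δ), (α t).1 ∈ V := fun t ht => hball (by
    rw [Real.dist_eq, sub_zero, abs_lt]
    exact ⟨by linarith [ht.1, min_le_right ε δ], by linarith [ht.2, min_le_right ε δ]⟩)
  have hα' : ∀ t ∈ Set.Ioo (-min ε δ) (min ε δ),
      HasDerivAt α ((α t).2, -G (α t).1 (α t).2 (α t).2) t := fun t ht => hα t
    ⟨by linarith [ht.1, min_le_left ε δ], by linarith [ht.2, min_le_left ε δ]⟩
  have h1 : ∀ t ∈ Set.Ioo (-min ε δ) (min ε δ), HasDerivAt (fun t => (α t).1) (α t).2 t :=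
    fun t ht => (hα' t ht).fst
  have h2 : ∀ t ∈ Set.Ioo (-min ε δ) (min ε δ),
      HasDerivAt (deriv fun t => (α t).1) (-G (α t).1 (α t).2 (α t).2) t := by
    intro t ht
    have h : HasDerivAt (fun t => (α t).2) (-G (α t).1 (α t).2 (α t).2) t := (hα' t ht).snd
    refine h.congr_of_eventuallyEq ?_
    filter_upwards [isOpen_Ioo.mem_nhds ht] with s hs using (h1 s hs).deriv
  have hc : ContinuousOn α (Set.Ioo (-min ε δ) (min ε δ)) := fun t ht =>
    (hα' t ht).continuousAt.continuousWithinAt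
  refine ⟨fun t => (α t).1, min ε δ, hmin, by simp [hα0], by simpa [hα0] using h1 0 h0,
    by simpa [hα0] using h2 0 h0, (isGeodesicOn_christoffel_iff isOpen_Ioo).2 ⟨hαV, ?_, ?_⟩⟩
  · rw [show (2 : WithTop ℕ∞) = 1 + 1 by norm_num, contDiffOn_succ_iff_deriv_of_isOpen isOpen_Ioo]
    refine ⟨fun t ht => (h1 t ht).differentiableAt.differentiableWithinAt, by simp,
      contDiffOn_one_of_hasDerivAt isOpen_Ioo h2 ?_⟩
    have hGc : ContinuousOn (fun t => G (α t).1) (Set.Ioo (-min ε δ) (min ε δ)) :=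
      hG.continuousOn.comp hc.fst hαV
    exact ((hGc.clm_apply hc.snd).clm_apply hc.snd).neg
  · intro t ht
    rw [(h2 t ht).deriv, (h1 t ht).deriv, neg_add_cancel]

/-- A totally geodesic foliation satisfies the second fundamental form equation. -/
theorem TotallyGeodesic.fderiv_apply_self {n : ℕ} {V : Set (Fin n → ℝ)} (hV : IsOpen V)
    {G : (Fin n → ℝ) → (Fin n → ℝ) →L[ℝ] (Fin n → ℝ) →L[ℝ] (Fin n → ℝ)}
    (hG : ContDiffOn ℝ (⊤ : ℕ∞) G V) {ω : (Fin n → ℝ) → Fin n → ℝ}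
    (h : TotallyGeodesic V (christoffel G) ω) {x : Fin n → ℝ} (hx : x ∈ V)
    (hω : DifferentiableAt ℝ ω x) {v : Fin n → ℝ} (hv : covector n (ω x) v = 0) :
    covector n (fderiv ℝ ω x v) v = covector n (ω x) (G x v v) := by
  obtain ⟨γ, ε, hε, rfl, hγ1, hγ2, hγ⟩ := exists_isGeodesicOn hV hG hx v
  have h0 : (0 : ℝ) ∈ Set.Ioo (-ε) ε := by simpa using hε
  have hγs := ((isGeodesicOn_christoffel_iff isOpen_Ioo).1 hγ).2.1
  have htan := h (Set.Ioo (-ε) ε) isOpen_Ioo Set.ordConnected_Ioo h0 γ hγ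
    (by simpa only [hγ1.deriv_apply, covector_apply] using hv)
  have hzero : (fun t => covector n (ω (γ t)) (deriv γ t)) =ᶠ[nhds 0] fun _ => 0 := by
    filter_upwards [isOpen_Ioo.mem_nhds h0] with t ht
    rw [covector_apply, ← htan t ht]
    simp only [(hγs.hasDerivAt_deriv_deriv isOpen_Ioo ht).1.deriv_apply]
  have hd := ((covector n).hasFDerivAt.comp_hasDerivAt (0 : ℝ)
    (hω.hasFDerivAt.comp_hasDerivAt (0 : ℝ) hγ1)).clm_apply hγ2
  have hd0 := hd.unique ((hasDerivAt_const (0 : ℝ) (0 : ℝ)).congr_of_eventuallyEq hzero)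
  rw [hγ1.deriv] at hd0
  simpa [add_neg_eq_zero] using hd0
theorem ProjEquiv.exists_apply_self_eq {n : ℕ} {V : Set (Fin n → ℝ)}
    {G G₀ : (Fin n → ℝ) → (Fin n → ℝ) →L[ℝ] (Fin n → ℝ) →L[ℝ] (Fin n → ℝ)}
    (h : ProjEquiv V (christoffel G) (christoffel G₀)) {x : Fin n → ℝ} (hx : x ∈ V)
    (v : Fin n → ℝ) : ∃ c : ℝ, G₀ x v v = G x v v + c • v := by
  obtain ⟨ρ, -, h⟩ := h
  refine ⟨2 * ∑ i, ρ x i * v i, ?_⟩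
  ext k
  rw [← sum_sum_christoffel, Pi.add_apply, ← sum_sum_christoffel]
  simp only [h x hx, add_mul, Finset.sum_add_distrib, ite_mul, zero_mul, Finset.sum_ite_eq,
    Finset.mem_univ, if_true, Pi.smul_apply, smul_eq_mul]
  rw [Finset.sum_comm]
  simp only [Finset.sum_ite_irrel, Finset.sum_const_zero, Finset.sum_ite_eq, Finset.mem_univ,
    if_true, two_mul, add_mul, Finset.sum_mul, mul_right_comm, add_assoc]

theorem TotallyGeodesic.fderiv_apply {n : ℕ} {U V : Set (Fin n → ℝ)} (hU : IsOpen U)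
    (hV : IsOpen V) (hVU : V ⊆ U)
    {G G₀ : (Fin n → ℝ) → (Fin n → ℝ) →L[ℝ] (Fin n → ℝ) →L[ℝ] (Fin n → ℝ)}
    (hG : ContDiffOn ℝ (⊤ : ℕ∞) G V) {ω : (Fin n → ℝ) → Fin n → ℝ} (hω : IsFoliationForm U ω)
    (h : TotallyGeodesic V (christoffel G) ω) (hproj : ProjEquiv V (christoffel G) (christoffel G₀))
    {x : Fin n → ℝ} (hx : x ∈ V) (hsymm : ∀ u v, G₀ x u v = G₀ x v u) {u v : Fin n → ℝ}
    (hu : covector n (ω x) u = 0) (hv : covector n (ω x) v = 0) :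
    covector n (fderiv ℝ ω x u) v = covector n (ω x) (G₀ x u v) := by
  have hd : DifferentiableAt ℝ ω x :=
    (hω.1.differentiableOn (by simp)).differentiableAt (hU.mem_nhds (hVU hx))
  have hquad : ∀ w, covector n (ω x) w = 0 →
      covector n (fderiv ℝ ω x w) w = covector n (ω x) (G₀ x w w) := by
    intro w hw
    obtain ⟨c, hc⟩ := hproj.exists_apply_self_eq hx w
    rw [h.fderiv_apply_self hV hG hx hd hw, hc, map_add, map_smul, hw, smul_zero, add_zero]
  have h1 := hquad (u + v) (by rw [map_add, hu, hv, add_zero])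
  have h2 := hω.fderiv_apply_comm hU (hVU hx) hu hv
  simp only [map_add, add_apply, hquad u hu, hquad v hv, hsymm v u] at h1
  linarith

theorem ContinuousLinearMap.sum_apply_single_mul {n : ℕ} (c : (Fin n → ℝ) →L[ℝ] ℝ)
    (z : Fin n → ℝ) : ∑ k, c (Pi.single k 1) * z k = c z := by
  conv_rhs => rw [pi_eq_sum_univ' z, map_sum]
  simp only [map_smul, smul_eq_mul]
  exact Finset.sum_congr rfl fun j _ => mul_comm _ _

/-- A web that is geodesic for a connection projectively equivalent to a flat one is locally
linearized by the affine coordinates of the flat connection. -/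
theorem exists_linearization_of_geodesic {n d : ℕ} {U V : Set (Fin n → ℝ)} (hU : IsOpen U)
    {ωs : Fin d → (Fin n → ℝ) → Fin n → ℝ} (hω : ∀ i, IsFoliationForm U (ωs i))
    (hV : IsOpen V) (hVU : V ⊆ U) {p : Fin n → ℝ} (hp : p ∈ V)
    {Γ Γ₀ : Fin n → Fin n → Fin n → (Fin n → ℝ) → ℝ} (hΓ : IsTorsionFreeConn V Γ)
    (hgeo : ∀ i, TotallyGeodesic V Γ (ωs i)) (hΓ₀ : IsTorsionFreeConn V Γ₀)
    (hflat : ∀ x ∈ V, ∀ k l i j, curv Γ₀ k l i j x = 0) (hproj : ProjEquiv V Γ Γ₀) :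
    ∃ V : Set (Fin n → ℝ), IsOpen V ∧ p ∈ V ∧ V ⊆ U ∧
      ∃ φ ψ : (Fin n → ℝ) → Fin n → ℝ, ∃ W : Set (Fin n → ℝ), IsOpen W ∧
        ContDiffOn ℝ (⊤ : ℕ∞) φ V ∧ ContDiffOn ℝ (⊤ : ℕ∞) ψ W ∧
        Set.MapsTo φ V W ∧ Set.MapsTo ψ W V ∧
        (∀ x ∈ V, ψ (φ x) = x) ∧ (∀ y ∈ W, φ (ψ y) = y) ∧
        ∀ i, ∀ x ∈ V, ∃ (cv : Fin n → ℝ) (r : ℝ), cv ≠ 0 ∧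
          ∀ y, InLeaf V (ωs i) x y → (∑ k, cv k * φ y k) = r := by
  obtain ⟨G, hG, rfl⟩ := exists_christoffel_eq hΓ
  obtain ⟨G₀, hG₀, rfl⟩ := exists_christoffel_eq hΓ₀
  have hsymm : ∀ x u v, G₀ x u v = G₀ x v u := fun x =>
    apply_comm_of_christoffel_comm fun k i j => hΓ₀.2 k i j x
  obtain ⟨e, hpe, heV, hes, het, A, B, hAB⟩ := exists_affine_chart_of_flat hV hp hG₀
    (fun x _ => hsymm x) fun x hx => flat_of_curv_eq_zero
      ((hG₀.differentiableOn (by simp)).differentiableAt (hV.mem_nhds hx)) (hflat x hx)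
  refine ⟨e.source, e.open_source, hpe, heV.trans hVU, e, e.symm, e.target, e.open_target, hes, het,
    e.mapsTo, e.symm.mapsTo, fun x => e.left_inv, fun y => e.right_inv, fun i x hx => ?_⟩
  set c : (Fin n → ℝ) →L[ℝ] ℝ := (covector n (ωs i x)).comp (B x) with hc
  refine ⟨fun k => c (Pi.single k 1), c (e x), fun h0 => ?_, ?_⟩
  · refine covector_self_ne_zero ((hω i).2.1 x (hVU (heV hx))) ?_
    have hBA : B x (A x (ωs i x)) = ωs i x := by
      simpa using DFunLike.congr_fun (hAB x hx).2.1 (ωs i x)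
    have hcA := c.sum_apply_single_mul (A x (ωs i x))
    rw [hc, ContinuousLinearMap.comp_apply, hBA] at hcA
    rw [← hcA]
    exact Finset.sum_eq_zero fun k _ => by
      rw [← hc, show c (Pi.single k 1) = 0 from congrFun h0 k, zero_mul]
  · rintro y ⟨γ, hγ, rfl, rfl, hγV, htan⟩
    rw [c.sum_apply_single_mul]
    have hγd : ∀ t, HasDerivAt γ (deriv γ t) t := fun t =>
      (hγ.differentiable one_ne_zero).differentiableAt.hasDerivAt
    have hωs : ContDiffOn ℝ (⊤ : ℕ∞) (ωs i) e.source := (hω i).1.mono (heV.trans hVU)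
    refine apply_eq_of_tangent_path e.open_source (θ := fun x => covector n (ωs i x)) (w := ωs i)
      (hG₀.continuousOn.mono heV) hAB
      ((covector n).contDiff.comp_contDiffOn (hωs.of_le (WithTop.coe_le_coe.2 le_top)))
      hωs.continuousOn (fun x hx => covector_self_ne_zero ((hω i).2.1 x (hVU (heV hx))))
      (fun x hx u v hu hv => ?_) (fun t _ => hγd t)
      (hγ.continuous_deriv le_rfl).continuousOn hγV fun t ht => ?_
    · rw [fderiv_covector_comp ((hωs.differentiableOn (by simp)).differentiableAt
        (e.open_source.mem_nhds hx))]
      exact (hgeo i).fderiv_apply hU hV hVU hG (hω i) hproj (heV hx) (hsymm x) hu hv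
    · rw [covector_apply, ← htan t ht]
      simp only [(hγd t).deriv_apply]

/-- A connection admitting an invertible parallel coframe is flat. -/
theorem flat_of_fderiv_eq_mul {E : Type*} [NormedAddCommGroup E] [NormedSpace ℝ E]
    {G : E → E →L[ℝ] E →L[ℝ] E} {A : E → E →L[ℝ] E} {V : Set E} (hV : IsOpen V)
    (hA : ContDiffOn ℝ 2 A V) (hG : DifferentiableOn ℝ G V)
    (hAG : ∀ x ∈ V, ∀ u, fderiv ℝ A x u = A x * G x u) {x : E} (hx : x ∈ V) {B : E →L[ℝ] E}
    (hBA : B * A x = 1) (u v : E) :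
    G x u * G x v + fderiv ℝ G x u v = G x v * G x u + fderiv ℝ G x v u := by
  have hxV := hV.mem_nhds hx
  have hAx : HasFDerivAt A (fderiv ℝ A x) x :=
    ((hA.differentiableOn two_ne_zero).differentiableAt hxV).hasFDerivAt
  have hGx := (hG.differentiableAt hxV).hasFDerivAt
  have hdA : HasFDerivAt (fderiv ℝ A) (fderiv ℝ (fderiv ℝ A) x) x :=
    (((hA.contDiffAt hxV).fderiv_right (m := 1) (by norm_num)).differentiableAt
      one_ne_zero).hasFDerivAt
  have hexp : ∀ u v, fderiv ℝ (fderiv ℝ A) x u v = A x * (G x u * G x v + fderiv ℝ G x u v) := by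
    intro u v
    have h1 := hdA.clm_apply (hasFDerivAt_const v x)
    have h2 := hAx.mul' (hGx.clm_apply (hasFDerivAt_const v x))
    have h3 : (fun y => fderiv ℝ A y v) =ᶠ[nhds x] fun y => A y * G y v := by
      filter_upwards [hxV] with y hy using hAG y hy v
    have h4 := DFunLike.congr_fun (h1.unique (h2.congr_of_eventuallyEq h3)) u
    simpa [hAG x hx u, mul_add, mul_assoc, add_comm] using h4
  have hsymm := (hA.contDiffAt hxV).isSymmSndFDerivAt (by simp) u v
  rw [hexp, hexp] at hsymm
  simpa [← mul_assoc, hBA] using congrArg (B * ·) hsymm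

theorem exists_connection_of_chart {n : ℕ} {V W : Set (Fin n → ℝ)} (hV : IsOpen V)
    (hW : IsOpen W) {φ ψ : (Fin n → ℝ) → Fin n → ℝ} (hφ : ContDiffOn ℝ (⊤ : ℕ∞) φ V)
    (hψ : ContDiffOn ℝ (⊤ : ℕ∞) ψ W) (hφW : Set.MapsTo φ V W)
    (hAB : ∀ x ∈ V, fderiv ℝ φ x * fderiv ℝ ψ (φ x) = 1) :
    ∃ G : (Fin n → ℝ) → (Fin n → ℝ) →L[ℝ] (Fin n → ℝ) →L[ℝ] (Fin n → ℝ),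
      ContDiffOn ℝ (⊤ : ℕ∞) G V ∧ (∀ x u v, G x u v = G x v u) ∧
      ∀ x ∈ V, ∀ u, fderiv ℝ (fderiv ℝ φ) x u = fderiv ℝ φ x * G x u := by
  classical
  refine ⟨V.indicator fun x => (ContinuousLinearMap.compL ℝ _ _ _ (fderiv ℝ ψ (φ x))).comp
    (fderiv ℝ (fderiv ℝ φ) x), ?_, fun x u v => ?_, fun x hx u => ?_⟩
  · refine ContDiffOn.congr ?_ fun x hx => Set.indicator_of_mem hx _
    have h1 : ContDiffOn ℝ (⊤ : ℕ∞) (fun x => fderiv ℝ ψ (φ x)) V :=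
      (hψ.fderiv_of_isOpen hW (by simp)).comp hφ hφW
    exact ((ContinuousLinearMap.compL ℝ _ _ _).contDiff.comp_contDiffOn h1).clm_comp
      ((hφ.fderiv_of_isOpen hV (m := (⊤ : ℕ∞)) (by simp)).fderiv_of_isOpen hV (by simp))
  · by_cases hx : x ∈ V
    · have h := (hφ.contDiffAt (hV.mem_nhds hx)).isSymmSndFDerivAt
        (by rw [minSmoothness_of_isRCLikeNormedField]; exact WithTop.coe_le_coe.2 le_top) u v
      simp [hx, h]
    · simp [hx]
  · ext w : 1
    have h := DFunLike.congr_fun (hAB x hx) (fderiv ℝ (fderiv ℝ φ) x u w)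
    simpa [hx] using h.symm

/-- If the leaves of `ω` lie in hyperplanes in the chart `φ`, then `ker ω` is totally geodesic for
every connection whose affine coordinates are given by `φ`. -/
theorem totallyGeodesic_of_leaves_in_hyperplanes {n : ℕ} {V W : Set (Fin n → ℝ)} (hV : IsOpen V)
    (hW : IsOpen W) {φ ψ : (Fin n → ℝ) → Fin n → ℝ} (hφ : ContDiffOn ℝ (⊤ : ℕ∞) φ V)
    (hψ : ContDiffOn ℝ (⊤ : ℕ∞) ψ W) (hφW : Set.MapsTo φ V W) (hψV : Set.MapsTo ψ W V)
    (hψφ : ∀ x ∈ V, ψ (φ x) = x) (hφψ : ∀ y ∈ W, φ (ψ y) = y)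
    (hBA : ∀ x ∈ V, fderiv ℝ ψ (φ x) * fderiv ℝ φ x = 1)
    {G : (Fin n → ℝ) → (Fin n → ℝ) →L[ℝ] (Fin n → ℝ) →L[ℝ] (Fin n → ℝ)}
    (hG : ∀ x ∈ V, ∀ u, fderiv ℝ (fderiv ℝ φ) x u = fderiv ℝ φ x * G x u)
    {ω : (Fin n → ℝ) → Fin n → ℝ} (hω : ContDiffOn ℝ (⊤ : ℕ∞) ω V) (hω0 : ∀ x ∈ V, ω x ≠ 0)
    (hleaf : ∀ x ∈ V, ∃ (cv : Fin n → ℝ) (r : ℝ), cv ≠ 0 ∧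
      ∀ y, InLeaf V ω x y → (∑ k, cv k * φ y k) = r) :
    TotallyGeodesic V (christoffel G) ω := by
  intro I hI hIc h0 γ hγ hstart
  obtain ⟨hγV, hγ2, hγeq⟩ := (isGeodesicOn_christoffel_iff hI).1 hγ
  have hder := fun t (ht : t ∈ I) => hγ2.hasDerivAt_deriv_deriv hI ht
  have hIp : IsPreconnected I := hIc.isPreconnected
  have hBA' : ∀ x ∈ V, ∀ v, fderiv ℝ ψ (φ x) (fderiv ℝ φ x v) = v := fun x hx v => by
    simpa using DFunLike.congr_fun (hBA x hx) v
  set θ : (Fin n → ℝ) → (Fin n → ℝ) →L[ℝ] ℝ := fun y =>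
    (covector n (ω (ψ y))).comp (fderiv ℝ ψ y) with hθ
  have hθs : ContDiffOn ℝ 1 θ W := by
    have h1 : ContDiffOn ℝ 1 (fun y => covector n (ω (ψ y))) W :=
      (covector n).contDiff.comp_contDiffOn
        ((hω.comp hψ hψV).of_le (WithTop.coe_le_coe.2 le_top))
    exact h1.clm_comp (hψ.fderiv_of_isOpen hW (WithTop.coe_le_coe.2 le_top))
  set f : ℝ → ℝ := fun t => covector n (ω (γ t)) (deriv γ t) with hf
  have hfsum : ∀ t ∈ I, ∑ k, ω (γ t) k * deriv (fun u => γ u k) t = f t := fun t ht => by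
    simp only [hf, covector_apply, (hder t ht).1.deriv_apply]
  have hfc : ∀ t ∈ I, ContinuousAt f t := by
    intro t ht
    have h1 : ContinuousAt ω (γ t) := (hω.contDiffAt (hV.mem_nhds (hγV t ht))).continuousAt
    have h2 : ContinuousAt (fun t => ω (γ t)) t := h1.comp (hder t ht).1.continuousAt
    exact ((covector n).continuous.continuousAt.comp h2).clm_apply (hder t ht).2.continuousAt
  have hφd : ∀ t ∈ I, HasDerivAt (fun t => φ (γ t)) (fderiv ℝ φ (γ t) (deriv γ t)) t :=
    fun t ht => ((hφ.differentiableOn (by simp)).differentiableAt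
      (hV.mem_nhds (hγV t ht))).hasFDerivAt.comp_hasDerivAt t (hder t ht).1
  have hφdd : ∀ t ∈ I, HasDerivAt (fun t => fderiv ℝ φ (γ t) (deriv γ t)) 0 t := by
    intro t ht
    have h1 : HasFDerivAt (fderiv ℝ φ) (fderiv ℝ (fderiv ℝ φ) (γ t)) (γ t) :=
      (((hφ.fderiv_of_isOpen hV (m := 1) (WithTop.coe_le_coe.2 le_top)).differentiableOn
        one_ne_zero).differentiableAt (hV.mem_nhds (hγV t ht))).hasFDerivAt
    refine ((h1.comp_hasDerivAt t (hder t ht).1).clm_apply (hder t ht).2).congr_deriv ?_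
    have h2 := congrArg (fderiv ℝ φ (γ t)) (hγeq t ht)
    rw [map_add, map_zero, add_comm] at h2
    simpa [hG _ (hγV t ht)] using h2
  have hline : ∀ t₀ ∈ I, ∀ t ∈ I, f t = θ (φ (γ t₀) + (t - t₀) • fderiv ℝ φ (γ t₀) (deriv γ t₀))
      (fderiv ℝ φ (γ t₀) (deriv γ t₀)) := by
    intro t₀ ht₀ t ht
    have hb : ∀ s ∈ I, fderiv ℝ φ (γ s) (deriv γ s) = fderiv ℝ φ (γ t₀) (deriv γ t₀) :=
      fun s hs => hI.is_const_of_deriv_eq_zero hIp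
        (fun s hs => (hφdd s hs).differentiableAt.differentiableWithinAt)
        (fun s hs => (hφdd s hs).deriv) hs ht₀
    have hy : φ (γ t) - (t - t₀) • fderiv ℝ φ (γ t₀) (deriv γ t₀) = φ (γ t₀) := by
      have h1 : ∀ s ∈ I, HasDerivAt
          (fun s => φ (γ s) - (s - t₀) • fderiv ℝ φ (γ t₀) (deriv γ t₀)) 0 s := by
        intro s hs
        have h2 := (hφd s hs).sub
          (((hasDerivAt_id s).sub_const t₀).smul_const (fderiv ℝ φ (γ t₀) (deriv γ t₀)))
        refine h2.congr_deriv ?_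
        rw [hb s hs, one_smul, sub_self]
      have h3 := hI.is_const_of_deriv_eq_zero hIp
        (fun s hs => (h1 s hs).differentiableAt.differentiableWithinAt)
        (fun s hs => (h1 s hs).deriv) ht ht₀
      simpa using h3
    rw [← hy, sub_add_cancel, ← hb t ht]
    simp only [hf, hθ, ContinuousLinearMap.comp_apply, hψφ _ (hγV t ht), hBA' _ (hγV t ht)]
  have hopen : ∀ t₀ ∈ I, f t₀ = 0 → ∀ᶠ t in nhds t₀, f t = 0 := by
    intro t₀ ht₀ hft₀
    have hx₀ := hγV t₀ ht₀
    obtain ⟨cv, r, hcv, hr⟩ := hleaf (γ t₀) hx₀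
    have hrx : covector n cv (φ (γ t₀)) = r := by
      rw [covector_apply]
      exact hr _ ⟨fun _ => γ t₀, contDiff_const, rfl, rfl, fun _ _ => hx₀, fun _ _ => by simp⟩
    have hθ0 : θ (φ (γ t₀)) ≠ 0 := by
      intro h
      refine covector_self_ne_zero (hω0 _ hx₀) ?_
      have h1 := DFunLike.congr_fun h (fderiv ℝ φ (γ t₀) (ω (γ t₀)))
      simpa only [hθ, ContinuousLinearMap.comp_apply, hψφ _ hx₀, hBA' _ hx₀, zero_apply] using h1
    have hc0 : covector n cv ≠ 0 := fun h => covector_self_ne_zero hcv (by simp [h])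
    have hpath : ∀ β β' : ℝ → Fin n → ℝ, Continuous β' → (∀ t, HasDerivAt β (β' t) t) →
        β 0 = φ (γ t₀) → (∀ t, β t ∈ W) → (∀ t, θ (β t) (β' t) = 0) →
        covector n cv (β 1) = covector n cv (φ (γ t₀)) := by
      intro β β' hβ' hβ hβ0 hβW hβt
      have hβs : ContDiff ℝ 1 β := contDiff_one_iff_deriv.2 ⟨fun t => (hβ t).differentiableAt,
        by rwa [show deriv β = β' from funext fun t => (hβ t).deriv]⟩
      have hin : InLeaf V ω (γ t₀) (ψ (β 1)) := by
        refine ⟨fun t => ψ (β t), (hψ.of_le (WithTop.coe_le_coe.2 le_top)).comp_contDiff hβs hβW,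
          ?_, rfl, fun t _ => hψV (hβW t), fun t _ => ?_⟩
        · simp only [hβ0, hψφ _ hx₀]
        · have h1 : HasDerivAt (fun t => ψ (β t)) (fderiv ℝ ψ (β t) (β' t)) t :=
            ((hψ.differentiableOn (by simp)).differentiableAt
              (hW.mem_nhds (hβW t))).hasFDerivAt.comp_hasDerivAt t (hβ t)
          rw [← hβt t]
          simp only [hθ, ContinuousLinearMap.comp_apply, covector_apply, h1.deriv_apply]
      rw [hrx, covector_apply, ← hr _ hin, hφψ _ (hβW 1)]
    have hev := eventually_apply_line_eq_zero hW hθs (hφW hx₀) hθ0 hc0 hpath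
      (b := fderiv ℝ φ (γ t₀) (deriv γ t₀)) (by simpa [hft₀] using (hline t₀ ht₀ t₀ ht₀).symm)
    have htend : Filter.Tendsto (fun t => t - t₀) (nhds t₀) (nhds 0) := by
      have h : ContinuousAt (fun t => t - t₀) t₀ := by fun_prop
      simpa [ContinuousAt] using h
    filter_upwards [htend.eventually hev, hI.mem_nhds ht₀] with t h1 h2
    rw [hline t₀ ht₀ t h2, h1]
  have hsub : I ⊆ {t | t ∈ I ∧ f t = 0} := by
    refine hIp.subset_of_closure_inter_subset ?_ ⟨0, h0, h0, by rw [← hfsum 0 h0, hstart]⟩ ?_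
    · refine isOpen_iff_mem_nhds.2 fun t ht => ?_
      filter_upwards [hI.mem_nhds ht.1, hopen t ht.1 ht.2] with s h1 h2 using ⟨h1, h2⟩
    · rintro t ⟨htc, ht⟩
      refine ⟨ht, by_contra fun hne => ?_⟩
      obtain ⟨s, hs1, hs2⟩ := ((mem_closure_iff_frequently.1 htc).and_eventually
        ((hfc t ht).eventually_ne hne)).exists
      exact hs2 hs1.2
  intro t ht
  rw [hfsum t ht]
  exact (hsub ht).2

/-- A linearizable web is geodesic for the flat connection pulled back by the linearization. -/
theorem exists_flat_connection_of_linearization {n d : ℕ} {U V W : Set (Fin n → ℝ)}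
    {ωs : Fin d → (Fin n → ℝ) → Fin n → ℝ} (hωs : ∀ i, IsFoliationForm U (ωs i))
    (hV : IsOpen V) (hVU : V ⊆ U) (hW : IsOpen W) {φ ψ : (Fin n → ℝ) → Fin n → ℝ}
    (hφ : ContDiffOn ℝ (⊤ : ℕ∞) φ V) (hψ : ContDiffOn ℝ (⊤ : ℕ∞) ψ W)
    (hφW : Set.MapsTo φ V W) (hψV : Set.MapsTo ψ W V)
    (hψφ : ∀ x ∈ V, ψ (φ x) = x) (hφψ : ∀ y ∈ W, φ (ψ y) = y)
    (hleaf : ∀ i, ∀ x ∈ V, ∃ (cv : Fin n → ℝ) (r : ℝ), cv ≠ 0 ∧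
      ∀ y, InLeaf V (ωs i) x y → (∑ k, cv k * φ y k) = r) :
    ∃ Γ : Fin n → Fin n → Fin n → (Fin n → ℝ) → ℝ, IsTorsionFreeConn V Γ ∧
      (∀ i, TotallyGeodesic V Γ (ωs i)) ∧ ∀ x ∈ V, ∀ k l i j, curv Γ k l i j x = 0 := by
  have hφd : ∀ x ∈ V, HasFDerivAt φ (fderiv ℝ φ x) x := fun x hx =>
    ((hφ.differentiableOn (by simp)).differentiableAt (hV.mem_nhds hx)).hasFDerivAt
  have hψd : ∀ y ∈ W, HasFDerivAt ψ (fderiv ℝ ψ y) y := fun y hy =>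
    ((hψ.differentiableOn (by simp)).differentiableAt (hW.mem_nhds hy)).hasFDerivAt
  have hBA : ∀ x ∈ V, fderiv ℝ ψ (φ x) * fderiv ℝ φ x = 1 := fun x hx =>
    (((hψd _ (hφW hx)).comp x (hφd x hx)).congr_of_eventuallyEq
      (f₁ := id) (by filter_upwards [hV.mem_nhds hx] with z hz using (hψφ z hz).symm)).unique
        (hasFDerivAt_id x)
  have hAB : ∀ x ∈ V, fderiv ℝ φ x * fderiv ℝ ψ (φ x) = 1 := fun x hx => by
    have h1 : HasFDerivAt φ (fderiv ℝ φ x) (ψ (φ x)) := by rw [hψφ x hx]; exact hφd x hx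
    exact ((h1.comp (φ x) (hψd _ (hφW hx))).congr_of_eventuallyEq (f₁ := id)
      (by filter_upwards [hW.mem_nhds (hφW hx)] with z hz using (hφψ z hz).symm)).unique
        (hasFDerivAt_id _)
  obtain ⟨G, hG, hsymm, hGφ⟩ := exists_connection_of_chart hV hW hφ hψ hφW hAB
  have hGd : DifferentiableOn ℝ G V := hG.differentiableOn (by simp)
  refine ⟨christoffel G, ⟨fun k i j => ?_, fun k i j x => by simp only [christoffel, hsymm x]⟩,
    fun i => totallyGeodesic_of_leaves_in_hyperplanes hV hW hφ hψ hφW hψV hψφ hφψ hBA hGφ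
      ((hωs i).1.mono hVU) (fun x hx => (hωs i).2.1 x (hVU hx)) (hleaf i), fun x hx k l i j => ?_⟩
  · exact contDiffOn_pi.1 ((hG.clm_apply contDiffOn_const).clm_apply contDiffOn_const) k
  · rw [curv_christoffel (hGd.differentiableAt (hV.mem_nhds hx)), sub_eq_zero,
      flat_of_fderiv_eq_mul hV (hφ.fderiv_of_isOpen hV (WithTop.coe_le_coe.2 le_top)) hGd hGφ hx
        (hBA x hx)]

/-- a `d`-web of hypersurfaces (`d ≥ n+2`) is locally linearizable at `p`
(a local diffeomorphism sends every leaf of every web foliation into an affine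
hyperplane) iff, near `p`, the web is geodesic for a torsion-free connection that is
projectively equivalent to a flat connection. -/
theorem statement16 {n d : ℕ} (hn : 2 ≤ n) (hd : n + 2 ≤ d)
    (U : Set (Fin n → ℝ)) (hU : IsOpen U) (hUconn : IsConnected U)
    (ωs : Fin d → (Fin n → ℝ) → Fin n → ℝ) (hweb : IsWeb U ωs)
    (p : Fin n → ℝ) (hp : p ∈ U) :
    (∃ V : Set (Fin n → ℝ), IsOpen V ∧ p ∈ V ∧ V ⊆ U ∧
      ∃ φ ψ : (Fin n → ℝ) → Fin n → ℝ, ∃ W : Set (Fin n → ℝ), IsOpen W ∧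
        ContDiffOn ℝ (⊤ : ℕ∞) φ V ∧ ContDiffOn ℝ (⊤ : ℕ∞) ψ W ∧
        Set.MapsTo φ V W ∧ Set.MapsTo ψ W V ∧
        (∀ x ∈ V, ψ (φ x) = x) ∧ (∀ y ∈ W, φ (ψ y) = y) ∧
        ∀ i, ∀ x ∈ V, ∃ (cv : Fin n → ℝ) (r : ℝ), cv ≠ 0 ∧
          ∀ y, InLeaf V (ωs i) x y → (∑ k, cv k * φ y k) = r) ↔
    (∃ V : Set (Fin n → ℝ), IsOpen V ∧ p ∈ V ∧ V ⊆ U ∧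
      ∃ Γ Γ₀ : Fin n → Fin n → Fin n → (Fin n → ℝ) → ℝ,
        IsTorsionFreeConn V Γ ∧ (∀ i, TotallyGeodesic V Γ (ωs i)) ∧
        IsTorsionFreeConn V Γ₀ ∧ (∀ x ∈ V, ∀ k l i j, curv Γ₀ k l i j x = 0) ∧
        ProjEquiv V Γ Γ₀) := by
  constructor
  · rintro ⟨V, hV, hpV, hVU, φ, ψ, W, hW, hφ, hψ, hφW, hψV, hψφ, hφψ, hleaf⟩
    obtain ⟨Γ, hΓ, hgeo, hflat⟩ := exists_flat_connection_of_linearization hweb.1 hV hVU hW hφ hψ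
      hφW hψV hψφ hφψ hleaf
    exact ⟨V, hV, hpV, hVU, Γ, Γ, hΓ, hgeo, hΓ, hflat, 0, contDiffOn_const, by simp⟩
  · rintro ⟨V, hV, hpV, hVU, Γ, Γ₀, hΓ, hgeo, hΓ₀, hflat, hproj⟩
    exact exists_linearization_of_geodesic hU hweb.1 hV hVU hpV hΓ hgeo hΓ₀ hflat hproj
end
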